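/- arXiv:1207.0472 — 8 statements merged into one kernel-verified Lean document; each statement's English description precedes it below -/
import Mathlib

section
/- Let g be a Leibniz n-algebra over K. Then the actions ω₀^l and ω₀^r make g a co-representation over the Leibniz algebra (D_n(g), ω₁); that is, for all u,v ∈ D_n(g) and m ∈ g: (i) ω₀^l(ω₁(u,v), m) = ω₀^l(u, ω₀^l(v,m)) − ω₀^l(v, ω₀^l(u,m)); (ii) ω₀^l(v, ω₀^r(m,u)) = ω₀^r(ω₀^l(v,m), u) − ω₀^r(m, ω₁(u,v)); (iii) ω₀^r(ω₀^r(m,u), v) = ω₀^r(m, ω₁(u,v)) − ω₀^r(ω₀^l(v,m), u). -/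
open scoped TensorProduct
open PiTensorProduct

/-- Let `g` be a Leibniz `n`-algebra over a field `K` of characteristic `≠ 2`
(we write `n = m + 1`, so `n ≥ 2` corresponds to `1 ≤ m`).  The actions `ω₀ˡ` and `ω₀ʳ`,
determined on pure tensors by `ω₀ˡ(a₁⊗…⊗a_{n-1}, x) = -[x,a₁,…,a_{n-1}]` and
`ω₀ʳ(x, a₁⊗…⊗a_{n-1}) = [x,a₁,…,a_{n-1}]`, make `g` a co-representation over the Leibniz
algebra `(Dₙ(g), ω₁)`, where `Dₙ(g) = g^{⊗(n-1)}` and `ω₁` is determined on pure tensors by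
`ω₁(a₁⊗…⊗a_{n-1}, b₁⊗…⊗b_{n-1}) = Σᵢ a₁⊗…⊗[aᵢ,b₁,…,b_{n-1}]⊗…⊗a_{n-1}`. -/
theorem statement0 (K : Type) [Field K] (hchar : ringChar K ≠ 2)
    (g : Type) [AddCommGroup g] [Module K g] (m : ℕ) (hm : 1 ≤ m)
    -- the Leibniz (m+1)-algebra bracket and its fundamental identity
    (br : MultilinearMap K (fun _ : Fin (m+1) => g) g)
    (fund : ∀ (x : Fin (m+1) → g) (y : Fin m → g),
      br (Fin.cons (br x) y)
        = ∑ i : Fin (m+1), br (Function.update x i (br (Fin.cons (x i) y))))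
    -- the Leibniz bracket ω₁ on Dₙ(g) = g^{⊗ m}
    (ω₁ : (⨂[K]^m g) →ₗ[K] (⨂[K]^m g) →ₗ[K] (⨂[K]^m g))
    (hω₁ : ∀ a b : Fin m → g,
      ω₁ (tprod K a) (tprod K b)
        = ∑ i : Fin m, tprod K (Function.update a i (br (Fin.cons (a i) b))))
    -- the left action ω₀ˡ of Dₙ(g) on g
    (ω₀l : (⨂[K]^m g) →ₗ[K] g →ₗ[K] g)
    (hω₀l : ∀ (a : Fin m → g) (x : g), ω₀l (tprod K a) x = - br (Fin.cons x a))
    -- the right action ω₀ʳ of Dₙ(g) on g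
    (ω₀r : g →ₗ[K] (⨂[K]^m g) →ₗ[K] g)
    (hω₀r : ∀ (x : g) (a : Fin m → g), ω₀r x (tprod K a) = br (Fin.cons x a)) :
    -- the three co-representation axioms
    (∀ (u v : ⨂[K]^m g) (x : g),
        ω₀l (ω₁ u v) x = ω₀l u (ω₀l v x) - ω₀l v (ω₀l u x)) ∧
    (∀ (u v : ⨂[K]^m g) (x : g),
        ω₀l v (ω₀r x u) = ω₀r (ω₀l v x) u - ω₀r x (ω₁ u v)) ∧
    (∀ (u v : ⨂[K]^m g) (x : g),
        ω₀r (ω₀r x u) v = ω₀r x (ω₁ u v) - ω₀r (ω₀l v x) u) := by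
  have hl : ∀ (u : ⨂[K]^m g) (x : g), ω₀l u x = - ω₀r x u := by
    intro u x
    induction u using PiTensorProduct.induction_on with
    | smul_tprod r a => simp [hω₀l, hω₀r]
    | add a b ha hb => simp only [map_add, LinearMap.add_apply, ha, hb]; abel
  have key0 : ∀ (a b : Fin m → g) (x : g),
      ω₀r (ω₀r x (tprod K a)) (tprod K b)
        = ω₀r (ω₀r x (tprod K b)) (tprod K a) + ω₀r x (ω₁ (tprod K a) (tprod K b)) := by
    intro a b x
    rw [hω₁, map_sum]
    simp only [hω₀r]
    rw [fund, Fin.sum_univ_succ]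
    simp only [Fin.cons_zero, Fin.cons_succ, Fin.update_cons_zero, Fin.cons_update]
  have key : ∀ (u v : ⨂[K]^m g) (x : g),
      ω₀r (ω₀r x u) v = ω₀r (ω₀r x v) u + ω₀r x (ω₁ u v) := by
    intro u v x
    induction u using PiTensorProduct.induction_on with
    | smul_tprod r a =>
      induction v using PiTensorProduct.induction_on with
      | smul_tprod s b =>
        simp only [map_smul, LinearMap.smul_apply]
        rw [key0 a b x, smul_add, smul_add, smul_comm r s]
      | add c d hc hd =>
        simp only [map_add, LinearMap.add_apply, hc, hd]; abel
    | add c d hc hd =>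
      simp only [map_add, LinearMap.add_apply, hc, hd]; abel
  refine ⟨fun u v x => ?_, fun u v x => ?_, fun u v x => ?_⟩
  · simp only [hl, map_neg, LinearMap.neg_apply, key u v x]; abel
  · simp only [hl, map_neg, LinearMap.neg_apply, key u v x]; abel
  · simp only [hl, map_neg, LinearMap.neg_apply, key u v x]; abel
end

section
/- Let g be an n-Filippov algebra over K. Then the actions ω̄₀^l and ω̄₀^r, determined by ω̄₀^l(a₁∧…∧a_{n−1}, x) = −[x,a₁,…,a_{n−1}] and ω̄₀^r(x, a₁∧…∧a_{n−1}) = [x,a₁,…,a_{n−1}], are well defined on the exterior power and make g a co-representation over the Leibniz algebra (L_n(g), ω̄₀). -/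
open scoped TensorProduct
open PiTensorProduct

/-- The pure wedge `a₁ ∧ … ∧ a_m` as an element of the `m`-th exterior power `⋀[K]^m g`. -/
noncomputable def wedge (K : Type) [Field K] {g : Type} [AddCommGroup g] [Module K g] {m : ℕ}
    (a : Fin m → g) : ⋀[K]^m g :=
  ⟨ExteriorAlgebra.ιMulti K m a, ExteriorAlgebra.ιMulti_range K m ⟨a, rfl⟩⟩

/-- `M` together with a left action `l` and a right action `r` is a co-representation of the
Leibniz algebra `(h, br)`. -/
def IsCorep {K : Type} [Field K] {h M : Type} [AddCommGroup h] [Module K h]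
    [AddCommGroup M] [Module K M] (br : h →ₗ[K] h →ₗ[K] h)
    (l : h →ₗ[K] M →ₗ[K] M) (r : M →ₗ[K] h →ₗ[K] M) : Prop :=
  (∀ (x y : h) (a : M), l (br x y) a = l x (l y a) - l y (l x a)) ∧
  (∀ (x y : h) (a : M), l y (r a x) = r (l y a) x - r a (br x y)) ∧
  (∀ (x y : h) (a : M), r (r a x) y = r a (br x y) - r (l y a) x)

/-- Let `g` be an `n`-Filippov algebra over a field `K` of characteristic `≠ 2`
(write `n = m + 1`, `n ≥ 2`).  Then the actions `ω̄₀ˡ` and `ω̄₀ʳ`, determined by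
`ω̄₀ˡ(a₁∧…∧a_{n-1}, x) = -[x,a₁,…,a_{n-1}]` and `ω̄₀ʳ(x, a₁∧…∧a_{n-1}) = [x,a₁,…,a_{n-1}]`,
are well defined on the exterior power `Lₙ(g) = g^{∧(n-1)}` and make `g` a co-representation
over the Leibniz algebra `(Lₙ(g), ω̄₀)`. -/
theorem statement1 (K : Type) [Field K] (hchar : ringChar K ≠ 2)
    (g : Type) [AddCommGroup g] [Module K g] (m : ℕ) (hm : 1 ≤ m)
    (br : MultilinearMap K (fun _ : Fin (m+1) => g) g)
    (fund : ∀ (x : Fin (m+1) → g) (y : Fin m → g),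
      br (Fin.cons (br x) y)
        = ∑ i : Fin (m+1), br (Function.update x i (br (Fin.cons (x i) y))))
    (alt : ∀ (x : Fin (m+1) → g) (i j : Fin (m+1)), i ≠ j → x i = x j → br x = 0)
    -- the Leibniz bracket ω̄₀ on Lₙ(g)
    (ω₀bar : (⋀[K]^m g) →ₗ[K] (⋀[K]^m g) →ₗ[K] (⋀[K]^m g))
    (hω₀bar : ∀ a b : Fin m → g,
      ω₀bar (wedge K a) (wedge K b)
        = ∑ i : Fin m, wedge K (Function.update a i (br (Fin.cons (a i) b)))) :
    ∃ (l : (⋀[K]^m g) →ₗ[K] g →ₗ[K] g) (r : g →ₗ[K] (⋀[K]^m g) →ₗ[K] g),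
      (∀ (a : Fin m → g) (x : g), l (wedge K a) x = - br (Fin.cons x a)) ∧
      (∀ (x : g) (a : Fin m → g), r x (wedge K a) = br (Fin.cons x a)) ∧
      IsCorep ω₀bar l r := by
  classical
  let A : AlternatingMap K g g (Fin (m+1)) :=
    { br with map_eq_zero_of_eq' := fun v i j h hij => alt v i j hij h }
  have hA : ∀ v, A v = br v := fun _ => rfl
  let r : g →ₗ[K] (⋀[K]^m g) →ₗ[K] g :=
    (exteriorPower.alternatingMapLinearEquiv (R := K) (M := g) (N := g) (n := m)).toLinearMap ∘ₗ
      A.curryLeft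
  have hw : ∀ a : Fin m → g, wedge K a = exteriorPower.ιMulti K m a := fun _ => rfl
  have hr : ∀ (x : g) (a : Fin m → g), r x (wedge K a) = br (Fin.cons x a) := by
    intro x a
    rw [hw]
    change exteriorPower.alternatingMapLinearEquiv (A.curryLeft x) (exteriorPower.ιMulti K m a) = _
    rw [exteriorPower.alternatingMapLinearEquiv_apply_ιMulti]
    rfl
  have base : ∀ (z : g) (a b : Fin m → g),
      r (r z (wedge K a)) (wedge K b)
        = r (r z (wedge K b)) (wedge K a) + r z (ω₀bar (wedge K a) (wedge K b)) := by
    intro z a b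
    rw [hω₀bar, map_sum]
    simp only [hr]
    rw [fund, Fin.sum_univ_succ]
    simp [Fin.cons_update, Fin.update_cons_zero]
  have ind : ∀ (P : (⋀[K]^m g) → Prop), (∀ a, P (wedge K a)) → P 0 →
      (∀ x y, P x → P y → P (x + y)) → (∀ (c : K) x, P x → P (c • x)) → ∀ x, P x := by
    intro P h1 h0 h2 h3 x
    have hx : x ∈ Submodule.span K (Set.range (exteriorPower.ιMulti K m (M := g))) := by
      rw [exteriorPower.ιMulti_span]; trivial
    induction hx using Submodule.span_induction with
    | mem x h => obtain ⟨a, rfl⟩ := h; exact h1 a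
    | zero => exact h0
    | add x y _ _ hx hy => exact h2 x y hx hy
    | smul c x _ hx => exact h3 c x hx
  have key : ∀ (x y : ⋀[K]^m g) (z : g),
      r (r z x) y = r (r z y) x + r z (ω₀bar x y) := by
    intro x y z
    refine ind (fun x => r (r z x) y = r (r z y) x + r z (ω₀bar x y)) ?_ ?_ ?_ ?_ x
    · intro a
      refine ind (fun y => r (r z (wedge K a)) y
        = r (r z y) (wedge K a) + r z (ω₀bar (wedge K a) y)) ?_ ?_ ?_ ?_ y
      · intro b
        exact base z a b
      · simp
      · intro p q hp hq
        simp only [map_add, LinearMap.add_apply, hp, hq]; abel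
      · intro c p hp
        simp only [map_smul, LinearMap.smul_apply, hp, smul_add]
    · simp
    · intro p q hp hq
      simp only [map_add, LinearMap.add_apply, hp, hq]; abel
    · intro c p hp
      simp only [map_smul, LinearMap.smul_apply, hp, smul_add]
  refine ⟨-r.flip, r, fun a x => by simp [hr], hr, ?_, ?_, ?_⟩
  · intro x y a
    have := key x y a
    simp only [LinearMap.neg_apply, LinearMap.flip_apply, map_neg, neg_neg]
    rw [this]; abel
  · intro x y a
    have := key x y a
    simp only [LinearMap.neg_apply, LinearMap.flip_apply, map_neg]
    rw [this]; abel
  · intro x y a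
    have := key x y a
    simp only [LinearMap.neg_apply, LinearMap.flip_apply, map_neg]
    rw [this]; abel
end

section
/- Let g be an n-Filippov algebra over K. There is a unique bilinear map ω₂^l : L_n(g) × D_n(g) → D_n(g) satisfying ω₂^l(a₁∧…∧a_{n−1}, b₁⊗…⊗b_{n−1}) = −Σ_{i=1}^{n−1} b₁⊗…⊗[b_i,a₁,…,a_{n−1}]⊗…⊗b_{n−1}, and together with the trivial right action ω₂^r = 0 it makes D_n(g) an anti-symmetric co-representation over the Leibniz algebra (L_n(g), ω̄₀); in particular ω₂^l(ω̄₀(ξ,η), β) = ω₂^l(ξ, ω₂^l(η,β)) − ω₂^l(η, ω₂^l(ξ,β)) for all ξ,η ∈ L_n(g) and β ∈ D_n(g). -/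
open scoped TensorProduct
open PiTensorProduct

/-- The extension of an endomorphism of `g` to a derivation of the tensor power. -/
noncomputable def derT (K : Type) [Field K] (g : Type) [AddCommGroup g] [Module K g] (m : ℕ) :
    (g →ₗ[K] g) →ₗ[K] ((⨂[K]^m g) →ₗ[K] (⨂[K]^m g)) :=
  ∑ i : Fin m, (PiTensorProduct.mapMultilinear K (fun _ : Fin m => g)
    (fun _ : Fin m => g)).toLinearMap (fun _ => LinearMap.id) i

theorem derT_apply (K : Type) [Field K] (g : Type) [AddCommGroup g] [Module K g] (m : ℕ)
    (T : g →ₗ[K] g) (b : Fin m → g) :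
    derT K g m T (tprod K b) = ∑ i : Fin m, tprod K (Function.update b i (T (b i))) := by
  simp only [derT, LinearMap.sum_apply, MultilinearMap.toLinearMap_apply,
    PiTensorProduct.mapMultilinear_apply]
  refine Finset.sum_congr rfl fun i _ => ?_
  erw [PiTensorProduct.map_tprod]
  congr 1
  funext j
  by_cases h : j = i
  · subst h; simp
  · simp [h]

theorem derT_comm (K : Type) [Field K] (g : Type) [AddCommGroup g] [Module K g] (m : ℕ)
    (S T : g →ₗ[K] g) (β : ⨂[K]^m g) :
    derT K g m (S ∘ₗ T - T ∘ₗ S) β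
      = derT K g m S (derT K g m T β) - derT K g m T (derT K g m S β) := by
  have key : derT K g m (S ∘ₗ T - T ∘ₗ S)
      = derT K g m S ∘ₗ derT K g m T - derT K g m T ∘ₗ derT K g m S := by
    refine PiTensorProduct.ext (MultilinearMap.ext fun b => ?_)
    simp only [LinearMap.compMultilinearMap_apply, LinearMap.sub_apply, LinearMap.comp_apply,
      map_sub, derT_apply, map_sum]
    rw [Finset.sum_comm (f := fun i j => tprod K (Function.update
      (Function.update b i (S (b i))) j (T (Function.update b i (S (b i)) j))))]
    rw [← Finset.sum_sub_distrib, ← Finset.sum_sub_distrib]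
    refine Finset.sum_congr rfl fun i _ => ?_
    rw [← Finset.sum_sub_distrib, Finset.sum_eq_single i]
    · simp
    · intro j _ hj
      rw [Function.update_of_ne hj, Function.update_of_ne hj.symm, Function.update_comm hj, sub_self]
    · simp
  rw [key]; rfl

/-- Let `g` be an `n`-Filippov algebra over a field `K` of characteristic `≠ 2`
(write `n = m + 1`, `n ≥ 2`).  There is a unique bilinear map `ω₂ˡ : Lₙ(g) × Dₙ(g) → Dₙ(g)`
satisfying `ω₂ˡ(a₁∧…∧a_{n-1}, b₁⊗…⊗b_{n-1}) = -Σᵢ b₁⊗…⊗[bᵢ,a₁,…,a_{n-1}]⊗…⊗b_{n-1}`, and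
together with the trivial right action `ω₂ʳ = 0` it makes `Dₙ(g)` an anti-symmetric
co-representation over the Leibniz algebra `(Lₙ(g), ω̄₀)`; in particular
`ω₂ˡ(ω̄₀(ξ,η), β) = ω₂ˡ(ξ, ω₂ˡ(η,β)) - ω₂ˡ(η, ω₂ˡ(ξ,β))`. -/
theorem statement2 (K : Type) [Field K] (hchar : ringChar K ≠ 2)
    (g : Type) [AddCommGroup g] [Module K g] (m : ℕ) (hm : 1 ≤ m)
    (br : MultilinearMap K (fun _ : Fin (m+1) => g) g)
    (fund : ∀ (x : Fin (m+1) → g) (y : Fin m → g),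
      br (Fin.cons (br x) y)
        = ∑ i : Fin (m+1), br (Function.update x i (br (Fin.cons (x i) y))))
    (alt : ∀ (x : Fin (m+1) → g) (i j : Fin (m+1)), i ≠ j → x i = x j → br x = 0)
    -- the Leibniz bracket ω̄₀ on Lₙ(g)
    (ω₀bar : (⋀[K]^m g) →ₗ[K] (⋀[K]^m g) →ₗ[K] (⋀[K]^m g))
    (hω₀bar : ∀ a b : Fin m → g,
      ω₀bar (wedge K a) (wedge K b)
        = ∑ i : Fin m, wedge K (Function.update a i (br (Fin.cons (a i) b)))) :
    (∃! f : (⋀[K]^m g) →ₗ[K] (⨂[K]^m g) →ₗ[K] (⨂[K]^m g),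
      ∀ a b : Fin m → g,
        f (wedge K a) (tprod K b)
          = - ∑ i : Fin m, tprod K (Function.update b i (br (Fin.cons (b i) a)))) ∧
    (∀ f : (⋀[K]^m g) →ₗ[K] (⨂[K]^m g) →ₗ[K] (⨂[K]^m g),
      (∀ a b : Fin m → g,
        f (wedge K a) (tprod K b)
          = - ∑ i : Fin m, tprod K (Function.update b i (br (Fin.cons (b i) a)))) →
      IsCorep ω₀bar f (0 : (⨂[K]^m g) →ₗ[K] (⋀[K]^m g) →ₗ[K] (⨂[K]^m g)) ∧
      (∀ (ξ η : ⋀[K]^m g) (β : ⨂[K]^m g),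
        f (ω₀bar ξ η) β = f ξ (f η β) - f η (f ξ β))) := by
  classical
  let brA : g [⋀^Fin (m+1)]→ₗ[K] g :=
    { br with map_eq_zero_of_eq' := fun x i j h hij => alt x i j hij h }
  let R : (⋀[K]^m g) →ₗ[K] g →ₗ[K] g :=
    (exteriorPower.alternatingMapLinearEquiv.toLinearMap ∘ₗ
      AlternatingMap.curryLeft brA).flip
  have hR : ∀ (a : Fin m → g) (x : g), R (wedge K a) x = br (Fin.cons x a) := by
    intro a x
    exact exteriorPower.alternatingMapLinearEquiv_apply_ιMulti _ _
  have hext : ∀ {N : Type} [AddCommGroup N] [Module K N] (p q : (⋀[K]^m g) →ₗ[K] N),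
      (∀ a, p (wedge K a) = q (wedge K a)) → p = q := by
    intro N _ _ p q h
    exact exteriorPower.linearMap_ext (AlternatingMap.ext h)
  let F : (⋀[K]^m g) →ₗ[K] (⨂[K]^m g) →ₗ[K] (⨂[K]^m g) := -(derT K g m ∘ₗ R)
  have hF : ∀ a b : Fin m → g,
        F (wedge K a) (tprod K b)
          = - ∑ i : Fin m, tprod K (Function.update b i (br (Fin.cons (b i) a))) := by
    intro a b
    change -(derT K g m (R (wedge K a)) (tprod K b)) = _
    simp only [derT_apply, hR]
  have huniq : ∀ f : (⋀[K]^m g) →ₗ[K] (⨂[K]^m g) →ₗ[K] (⨂[K]^m g),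
      (∀ a b : Fin m → g,
        f (wedge K a) (tprod K b)
          = - ∑ i : Fin m, tprod K (Function.update b i (br (Fin.cons (b i) a)))) → f = F := by
    intro f hf
    refine hext _ _ fun a => PiTensorProduct.ext (MultilinearMap.ext fun b => ?_)
    exact (hf a b).trans (hF a b).symm
  have hRω' : ∀ a b : Fin m → g, R (ω₀bar (wedge K a) (wedge K b))
      = R (wedge K b) ∘ₗ R (wedge K a) - R (wedge K a) ∘ₗ R (wedge K b) := by
    intro a b
    ext x
    have h := fund (Fin.cons x a) b
    rw [Fin.sum_univ_succ] at h
    simp only [Fin.cons_zero, Fin.cons_succ, Fin.update_cons_zero, ← Fin.cons_update] at h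
    simp only [hω₀bar, map_sum, LinearMap.sum_apply, LinearMap.sub_apply, LinearMap.comp_apply, hR]
    rw [h]; abel
  have hRω : ∀ ξ η, R (ω₀bar ξ η) = R η ∘ₗ R ξ - R ξ ∘ₗ R η := by
    let C := LinearMap.mul K (Module.End K g)
    have e : ω₀bar.compr₂ R = (C.compl₁₂ R R).flip - C.compl₁₂ R R := by
      refine hext _ _ fun a => hext _ _ fun b => ?_
      exact hRω' a b
    intro ξ η
    exact LinearMap.congr_fun₂ e ξ η
  have main : ∀ (ξ η : ⋀[K]^m g) (β : ⨂[K]^m g),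
        F (ω₀bar ξ η) β = F ξ (F η β) - F η (F ξ β) := by
    intro ξ η β
    change -(derT K g m (R (ω₀bar ξ η)) β)
      = -(derT K g m (R ξ) (-(derT K g m (R η) β))) - -(derT K g m (R η) (-(derT K g m (R ξ) β)))
    rw [hRω, derT_comm, map_neg, map_neg]
    abel
  refine ⟨⟨F, hF, huniq⟩, fun f hf => ?_⟩
  obtain rfl := huniq f hf
  exact ⟨⟨main, by simp, by simp⟩, main⟩
end

section
/- Let g be a Leibniz n-algebra over K. For a tuple x = (x₁,…,x_{n−1}) ∈ g^{n−1}, let λ_x : g^{⊗(n−1)} → g^{⊗(n−1)} be the linear map determined on pure tensors by λ_x(b₁⊗…⊗b_{n−1}) = −Σ_{j=1}^{n−1} b₁⊗…⊗[b_j,x₁,…,x_{n−1}]⊗…⊗b_{n−1}. Then for all tuples x = (x₁,…,x_{n−1}) and y = (y₁,…,y_{n−1}) in g^{n−1}, one has Σ_{i=1}^{n−1} λ_{(x₁,…,x_{i−1},[x_i,y₁,…,y_{n−1}],x_{i+1},…,x_{n−1})} = λ_x ∘ λ_y − λ_y ∘ λ_x as linear endomorphisms of g^{⊗(n−1)}.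 -/
open scoped TensorProduct
open PiTensorProduct

/-- Let `g` be a Leibniz `n`-algebra over a field `K` of characteristic `≠ 2`
(write `n = m + 1`, `n ≥ 2`).  For a tuple `x ∈ g^{n-1}` let `λ_x : g^{⊗(n-1)} → g^{⊗(n-1)}`
be the linear map determined on pure tensors by
`λ_x(b₁⊗…⊗b_{n-1}) = -Σⱼ b₁⊗…⊗[bⱼ,x₁,…,x_{n-1}]⊗…⊗b_{n-1}`.  Then for all tuples `x, y`,
`Σᵢ λ_{(x₁,…,[xᵢ,y₁,…,y_{n-1}],…,x_{n-1})} = λ_x ∘ λ_y - λ_y ∘ λ_x`. -/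
theorem statement3 (K : Type) [Field K] (hchar : ringChar K ≠ 2)
    (g : Type) [AddCommGroup g] [Module K g] (m : ℕ) (hm : 1 ≤ m)
    (br : MultilinearMap K (fun _ : Fin (m+1) => g) g)
    (fund : ∀ (x : Fin (m+1) → g) (y : Fin m → g),
      br (Fin.cons (br x) y)
        = ∑ i : Fin (m+1), br (Function.update x i (br (Fin.cons (x i) y))))
    (lam : (Fin m → g) → ((⨂[K]^m g) →ₗ[K] (⨂[K]^m g)))
    (hlam : ∀ (x : Fin m → g) (b : Fin m → g),
      lam x (tprod K b)
        = - ∑ j : Fin m, tprod K (Function.update b j (br (Fin.cons (b j) x)))) :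
    ∀ x y : Fin m → g,
      ∑ i : Fin m, lam (Function.update x i (br (Fin.cons (x i) y)))
        = lam x ∘ₗ lam y - lam y ∘ₗ lam x := by
  intro x y
  -- the fundamental identity, read as an identity of the operators `[-, x]` and `[-, y]`
  have key : ∀ a : g, ∑ i : Fin m, br (Fin.cons a (Function.update x i (br (Fin.cons (x i) y))))
      = br (Fin.cons (br (Fin.cons a x)) y) - br (Fin.cons (br (Fin.cons a y)) x) := by
    intro a
    rw [fund (Fin.cons a x) y, Fin.sum_univ_succ]
    simp only [Fin.cons_zero, Fin.cons_succ, Fin.update_cons_zero, ← Fin.cons_update]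
    abel
  have two : ∀ (u v b : Fin m → g), lam u (lam v (tprod K b))
      = ∑ j : Fin m, ∑ k : Fin m, tprod K (Function.update
          (Function.update b j (br (Fin.cons (b j) v))) k
          (br (Fin.cons (Function.update b j (br (Fin.cons (b j) v)) k) u))) := by
    intro u v b
    rw [hlam, map_neg, map_sum, ← Finset.sum_neg_distrib]
    refine Finset.sum_congr rfl fun j _ => ?_
    rw [hlam, neg_neg]
  apply PiTensorProduct.ext
  ext b
  simp only [LinearMap.compMultilinearMap_apply, LinearMap.sub_apply, LinearMap.comp_apply,
    LinearMap.sum_apply]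
  rw [two x y b, two y x b]
  simp only [hlam]
  rw [Finset.sum_neg_distrib, Finset.sum_comm, ← Finset.sum_neg_distrib]
  conv_rhs => rw [sub_eq_add_neg]; arg 2; rw [Finset.sum_comm]
  rw [← sub_eq_add_neg, ← Finset.sum_sub_distrib]
  refine Finset.sum_congr rfl fun j _ => ?_
  rw [← Finset.sum_sub_distrib]
  conv_rhs => rw [Finset.sum_eq_single j (h₀ := by
    intro k _ hk
    rw [Function.update_of_ne hk, Function.update_of_ne hk.symm,
      Function.update_comm hk, sub_self]) (h₁ := by simp)]
  simp only [Function.update_self, Function.update_idem]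
  rw [← MultilinearMap.map_update_sum, key, MultilinearMap.map_update_sub]
  abel
end

section
/- Let g be an n-Filippov algebra over K with n > 2 and dim_K g ≥ n. The canonical projections π₁^k : g ⊗ D_n(g)^{⊗(k+1)} → g ⊗ L_n(g)^{⊗(k+1)} are surjective and commute with the Loday boundaries of _nCL_*(g) and _nC_*(g), so that 0 → _nC^rel_*(g) → _nCL_*(g) → _nC_*(g) → 0 is a short exact sequence of chain complexes, where _nC^rel_k(g) := ker(π₁^k). Consequently there is a long exact sequence ⋯ → _nH^rel_{k−1}(g) → _nHL_k(g;K) → _nH^Lie_k(g;K) → _nH^rel_{k−2}(g) → ⋯ → _nH^rel_0(g) → _nHL_1(g;K) → _nH^Lie_1(g;K) → 0, and the induced map _nHL_0(g;K) → _nH^Lie_0(g;K) is an isomorphism. -/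
open scoped TensorProduct
open PiTensorProduct

/-- Quotient of a submodule `Z` (the cycles) by a submodule `B` of it (the boundaries). -/
def HqOf (K : Type) [Field K] (N : Type) [AddCommGroup N] [Module K N]
    (Z : Submodule K N) (B : Submodule K Z) : Type := Z ⧸ B

noncomputable instance (K : Type) [Field K] (N : Type) [AddCommGroup N] [Module K N]
    (Z : Submodule K N) (B : Submodule K Z) : AddCommGroup (HqOf K N Z B) :=
  inferInstanceAs (AddCommGroup (Z ⧸ B))

noncomputable instance (K : Type) [Field K] (N : Type) [AddCommGroup N] [Module K N]
    (Z : Submodule K N) (B : Submodule K Z) : Module K (HqOf K N Z B) :=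
  inferInstanceAs (Module K (Z ⧸ B))

/-- The class of a cycle in such a quotient. -/
def HqOf.mk (K : Type) [Field K] (N : Type) [AddCommGroup N] [Module K N]
    {Z : Submodule K N} {B : Submodule K Z} (x : Z) : HqOf K N Z B :=
  Submodule.Quotient.mk x

/-- Cycles in degree `k` of a nonnegatively graded chain complex (in degree `0` everything
is a cycle). -/
def cyclesC (K : Type) [Field K] (C : ℕ → Type) [∀ k, AddCommGroup (C k)]
    [∀ k, Module K (C k)] (d : ∀ k, C (k+1) →ₗ[K] C k) : ∀ k, Submodule K (C k)
  | 0 => ⊤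
  | (k+1) => LinearMap.ker (d k)

/-- Boundaries in degree `k`, as a submodule of the cycles. -/
def boundariesC (K : Type) [Field K] (C : ℕ → Type) [∀ k, AddCommGroup (C k)]
    [∀ k, Module K (C k)] (d : ∀ k, C (k+1) →ₗ[K] C k) (k : ℕ) :
    Submodule K (cyclesC K C d k) :=
  Submodule.comap (cyclesC K C d k).subtype (LinearMap.range (d k))

/-- Homology in degree `k` of a nonnegatively graded chain complex. -/
@[reducible] def homologyC (K : Type) [Field K] (C : ℕ → Type) [∀ k, AddCommGroup (C k)]
    [∀ k, Module K (C k)] (d : ∀ k, C (k+1) →ₗ[K] C k) (k : ℕ) : Type :=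
  HqOf K (C k) (cyclesC K C d k) (boundariesC K C d k)


noncomputable instance (K : Type) [Field K] (C : ℕ → Type) [∀ k, AddCommGroup (C k)]
    [∀ k, Module K (C k)] (d : ∀ k, C (k+1) →ₗ[K] C k) (k : ℕ) :
    AddCommGroup (homologyC K C d k) :=
  inferInstanceAs (AddCommGroup (HqOf K (C k) (cyclesC K C d k) (boundariesC K C d k)))

noncomputable instance (K : Type) [Field K] (C : ℕ → Type) [∀ k, AddCommGroup (C k)]
    [∀ k, Module K (C k)] (d : ∀ k, C (k+1) →ₗ[K] C k) (k : ℕ) :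
    Module K (homologyC K C d k) :=
  inferInstanceAs (Module K (HqOf K (C k) (cyclesC K C d k) (boundariesC K C d k)))

/-- Relative cycles in degree `k`: elements of the kernel subcomplex `ker P` (which sits in
chain degree `k+1`) killed by the boundary. -/
def relCyclesC (K : Type) [Field K] (C C' : ℕ → Type) [∀ k, AddCommGroup (C k)]
    [∀ k, Module K (C k)] [∀ k, AddCommGroup (C' k)] [∀ k, Module K (C' k)]
    (d : ∀ k, C (k+1) →ₗ[K] C k) (P : ∀ k, C k →ₗ[K] C' k) (k : ℕ) :
    Submodule K (C (k+1)) :=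
  LinearMap.ker (P (k+1)) ⊓ LinearMap.ker (d k)

/-- Relative boundaries in degree `k`, as a submodule of the relative cycles. -/
def relBoundariesC (K : Type) [Field K] (C C' : ℕ → Type) [∀ k, AddCommGroup (C k)]
    [∀ k, Module K (C k)] [∀ k, AddCommGroup (C' k)] [∀ k, Module K (C' k)]
    (d : ∀ k, C (k+1) →ₗ[K] C k) (P : ∀ k, C k →ₗ[K] C' k) (k : ℕ) :
    Submodule K (relCyclesC K C C' d P k) :=
  Submodule.comap (relCyclesC K C C' d P k).subtype
    (Submodule.map (d (k+1)) (LinearMap.ker (P (k+2))))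

/-- Homology in degree `k` of the kernel subcomplex `ker P` (sitting in chain degree
`k+1`). -/
@[reducible] def relHomologyC (K : Type) [Field K] (C C' : ℕ → Type) [∀ k, AddCommGroup (C k)]
    [∀ k, Module K (C k)] [∀ k, AddCommGroup (C' k)] [∀ k, Module K (C' k)]
    (d : ∀ k, C (k+1) →ₗ[K] C k) (P : ∀ k, C k →ₗ[K] C' k) (k : ℕ) : Type :=
  HqOf K (C (k+1)) (relCyclesC K C C' d P k) (relBoundariesC K C C' d P k)


noncomputable instance (K : Type) [Field K] (C C' : ℕ → Type) [∀ k, AddCommGroup (C k)]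
    [∀ k, Module K (C k)] [∀ k, AddCommGroup (C' k)] [∀ k, Module K (C' k)]
    (d : ∀ k, C (k+1) →ₗ[K] C k) (P : ∀ k, C k →ₗ[K] C' k) (k : ℕ) :
    AddCommGroup (relHomologyC K C C' d P k) :=
  inferInstanceAs
    (AddCommGroup (HqOf K (C (k+1)) (relCyclesC K C C' d P k) (relBoundariesC K C C' d P k)))

noncomputable instance (K : Type) [Field K] (C C' : ℕ → Type) [∀ k, AddCommGroup (C k)]
    [∀ k, Module K (C k)] [∀ k, AddCommGroup (C' k)] [∀ k, Module K (C' k)]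
    (d : ∀ k, C (k+1) →ₗ[K] C k) (P : ∀ k, C k →ₗ[K] C' k) (k : ℕ) :
    Module K (relHomologyC K C C' d P k) :=
  inferInstanceAs
    (Module K (HqOf K (C (k+1)) (relCyclesC K C C' d P k) (relBoundariesC K C C' d P k)))

section aux
variable {K : Type} [Field K] {V H : Type} [AddCommGroup V] [Module K V] [AddCommGroup H] [Module K H]

/-- Append a tensor factor on the right. -/
noncomputable def snocT (k : ℕ) : (⨂[K]^k H) →ₗ[K] H →ₗ[K] (⨂[K]^(k+1) H) :=
  PiTensorProduct.lift (MultilinearMap.curryRight (tprod K : MultilinearMap K (fun _ : Fin (k+1) => H) _))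

theorem snocT_tprod (k : ℕ) (hs : Fin k → H) (h : H) :
    snocT (K := K) k (tprod K hs) h = tprod K (Fin.snoc (α := fun _ => H) hs h) := by
  simp [snocT]

variable (V) in
noncomputable def sn (k : ℕ) (h : H) : (V ⊗[K] (⨂[K]^k H)) →ₗ[K] (V ⊗[K] (⨂[K]^(k+1) H)) :=
  LinearMap.lTensor V ((snocT (K := K) k).flip h)

theorem sn_tprod (k : ℕ) (h : H) (v : V) (hs : Fin k → H) :
    sn V k h (v ⊗ₜ[K] tprod K hs) = v ⊗ₜ[K] tprod K (Fin.snoc (α := fun _ => H) hs h) := by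
  simp [sn, snocT_tprod]

theorem sn_add (k : ℕ) (h h' : H) (x : V ⊗[K] (⨂[K]^k H)) :
    sn V k (h + h') x = sn V k h x + sn V k h' x := by
  simp [sn, LinearMap.lTensor_add]

theorem sn_sub (k : ℕ) (h h' : H) (x : V ⊗[K] (⨂[K]^k H)) :
    sn V k (h - h') x = sn V k h x - sn V k h' x := by
  simp [sn, LinearMap.lTensor_sub]

theorem ext_pure {k : ℕ} {W : Type} [AddCommGroup W] [Module K W]
    {f f' : (V ⊗[K] (⨂[K]^k H)) →ₗ[K] W}
    (h : ∀ v (hs : Fin k → H), f (v ⊗ₜ[K] tprod K hs) = f' (v ⊗ₜ[K] tprod K hs)) : f = f' := by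
  apply TensorProduct.ext
  ext v : 1
  apply PiTensorProduct.ext
  ext hs
  exact h v hs

theorem ext_sn {k : ℕ} {W : Type} [AddCommGroup W] [Module K W]
    {f f' : (V ⊗[K] (⨂[K]^(k+1) H)) →ₗ[K] W}
    (h : ∀ a x, f (sn V k a x) = f' (sn V k a x)) : f = f' := by
  apply ext_pure
  intro v hs
  have := h (hs (Fin.last k)) (v ⊗ₜ[K] tprod K (Fin.init hs))
  rw [sn_tprod] at this
  simpa using this

/-- The twisted action of `h`. -/
noncomputable def TT (ω : H →ₗ[K] H →ₗ[K] H) (r : V →ₗ[K] H →ₗ[K] V) (k : ℕ) (h : H) :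
    (V ⊗[K] (⨂[K]^k H)) →ₗ[K] (V ⊗[K] (⨂[K]^k H)) :=
  LinearMap.rTensor _ (r.flip h) - LinearMap.lTensor V
    (∑ i : Fin k, PiTensorProduct.map
      (Function.update (fun _ : Fin k => (LinearMap.id : H →ₗ[K] H)) i (ω.flip h)))

theorem TT_tprod (ω : H →ₗ[K] H →ₗ[K] H) (r : V →ₗ[K] H →ₗ[K] V) (k : ℕ) (h : H)
    (v : V) (hs : Fin k → H) : TT ω r k h (v ⊗ₜ[K] tprod K hs) =
      r v h ⊗ₜ[K] tprod K hs
        - ∑ i : Fin k, v ⊗ₜ[K] tprod K (Function.update hs i (ω (hs i) h)) := by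
  simp only [TT, LinearMap.sub_apply, LinearMap.rTensor_tmul, LinearMap.lTensor_tmul,
    LinearMap.flip_apply, LinearMap.sum_apply, TensorProduct.tmul_sum]
  congr 1
  refine Finset.sum_congr rfl fun i _ => ?_
  erw [PiTensorProduct.map_tprod]
  congr 2
  ext j
  by_cases hj : j = i
  · subst hj; simp
  · simp [hj]

theorem TT_sn (ω : H →ₗ[K] H →ₗ[K] H) (r : V →ₗ[K] H →ₗ[K] V) (k : ℕ) (h a : H)
    (x : V ⊗[K] (⨂[K]^k H)) :
    TT ω r (k+1) h (sn V k a x) = sn V k a (TT ω r k h x) - sn V k (ω a h) x := by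
  have : TT ω r (k+1) h ∘ₗ sn V k a = sn V k a ∘ₗ TT ω r k h - sn V k (ω a h) := by
    apply ext_pure
    intro v hs
    simp only [LinearMap.comp_apply, LinearMap.sub_apply, sn_tprod, TT_tprod, map_sub, map_sum]
    rw [Fin.sum_univ_castSucc]
    simp only [Fin.snoc_castSucc, Fin.snoc_last, Fin.snoc_update, Fin.update_snoc_last]
    abel
  exact LinearMap.congr_fun this x

/-- action on coefficient only -/
noncomputable def EE (r : V →ₗ[K] H →ₗ[K] V) (k : ℕ) (u : H) :
    (V ⊗[K] (⨂[K]^k H)) →ₗ[K] (V ⊗[K] (⨂[K]^k H)) := LinearMap.rTensor _ (r.flip u)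

theorem EE_tprod (r : V →ₗ[K] H →ₗ[K] V) (k : ℕ) (h : H)
    (v : V) (hs : Fin k → H) : EE r k h (v ⊗ₜ[K] tprod K hs) = r v h ⊗ₜ[K] tprod K hs := by
  simp [EE]

theorem EE_sn (r : V →ₗ[K] H →ₗ[K] V) (k : ℕ) (u a : H) (x : V ⊗[K] (⨂[K]^k H)) :
    EE r (k+1) u (sn V k a x) = sn V k a (EE r k u x) := by
  have : EE r (k+1) u ∘ₗ sn V k a = sn V k a ∘ₗ EE r k u := by
    apply ext_pure
    intro v hs
    simp only [LinearMap.comp_apply, sn_tprod, EE_tprod]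
  exact LinearMap.congr_fun this x

theorem TT_comm (ω : H →ₗ[K] H →ₗ[K] H) (r : V →ₗ[K] H →ₗ[K] V)
    (hR : ∀ v a b, r v (ω a b) = r (r v a) b - r (r v b) a)
    (hL : ∀ x a b, ω x (ω a b) = ω (ω x a) b - ω (ω x b) a) (a b : H) (k : ℕ) :
    ∀ x, TT ω r k a (TT ω r k b x) - TT ω r k b (TT ω r k a x) - TT ω r k (ω a b) x
      = - EE r k (ω a b) x - EE r k (ω a b) x := by
  induction k with
  | zero =>
    intro x
    have : TT ω r 0 a ∘ₗ TT ω r 0 b - TT ω r 0 b ∘ₗ TT ω r 0 a - TT ω r 0 (ω a b)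
        = - EE r 0 (ω a b) - EE r 0 (ω a b) := by
      apply ext_pure
      intro v hs
      simp only [LinearMap.comp_apply, LinearMap.sub_apply, LinearMap.neg_apply, TT_tprod,
        EE_tprod, Finset.univ_eq_empty, Finset.sum_empty, sub_zero, hR, TensorProduct.sub_tmul]
      abel
    exact LinearMap.congr_fun this x
  | succ k ih =>
    intro x
    have : TT ω r (k+1) a ∘ₗ TT ω r (k+1) b - TT ω r (k+1) b ∘ₗ TT ω r (k+1) a
          - TT ω r (k+1) (ω a b)
        = - EE r (k+1) (ω a b) - EE r (k+1) (ω a b) := by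
      apply ext_sn
      intro c y
      have h1 := congrArg (sn V k c) (ih y)
      simp only [map_sub, map_neg] at h1
      simp only [LinearMap.comp_apply, LinearMap.sub_apply, LinearMap.neg_apply, TT_sn, map_sub,
        EE_sn, hL, sn_sub, ← h1]
      abel
    exact LinearMap.congr_fun this x

/-- the Loday boundary formula -/
def IsLoday (ω : H →ₗ[K] H →ₗ[K] H) (r : V →ₗ[K] H →ₗ[K] V)
    (d : ∀ k : ℕ, (V ⊗[K] (⨂[K]^(k+1) H)) →ₗ[K] (V ⊗[K] (⨂[K]^k H))) : Prop :=
  ∀ (k : ℕ) (v : V) (hs : Fin (k+1) → H),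
      d k (v ⊗ₜ[K] tprod K hs)
        = (∑ j : Fin (k+1), ((-1 : K)^((j : ℕ)+1)) •
            ((r v (hs j)) ⊗ₜ[K] tprod K (fun t => hs (j.succAbove t))))
        + ∑ j : Fin (k+1), ∑ i ∈ Finset.univ.filter (fun i : Fin (k+1) => i < j),
            ((-1 : K)^((j : ℕ))) •
              (v ⊗ₜ[K] tprod K
                (fun t => Function.update hs i (ω (hs i) (hs j)) (j.succAbove t)))

theorem d_sn_zero {ω : H →ₗ[K] H →ₗ[K] H} {r : V →ₗ[K] H →ₗ[K] V}
    {d : ∀ k : ℕ, (V ⊗[K] (⨂[K]^(k+1) H)) →ₗ[K] (V ⊗[K] (⨂[K]^k H))} (hd : IsLoday ω r d)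
    (a : H) (x) : d 0 (sn V 0 a x) = - TT ω r 0 a x := by
  have : d 0 ∘ₗ sn V 0 a = - TT ω r 0 a := by
    apply ext_pure
    intro v hs
    simp only [LinearMap.comp_apply, LinearMap.neg_apply, sn_tprod, TT_tprod, hd 0]
    have e : (Finset.univ.filter (fun i : Fin 1 => i < 0)) = ∅ := by decide
    have e2 : (Fin.snoc (α := fun _ => H) hs a : Fin 1 → H) 0 = a :=
      Fin.snoc_last (n := 0) (α := fun _ => H) a hs
    simp [Subsingleton.elim _ hs, e2]
  exact LinearMap.congr_fun this x

theorem snoc_succAbove_castSucc {H : Type} {k : ℕ} (hs : Fin (k+1) → H) (a : H) (j : Fin (k+1)) :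
    (fun t => (Fin.snoc (α := fun _ => H) hs a : Fin (k+2) → H) (j.castSucc.succAbove t))
      = Fin.snoc (α := fun _ => H) (fun t => hs (j.succAbove t)) a := by
  ext t
  refine Fin.lastCases ?_ (fun t => ?_) t
  · simp
  · rw [Fin.castSucc_succAbove_castSucc]
    simp

theorem d_sn_succ {ω : H →ₗ[K] H →ₗ[K] H} {r : V →ₗ[K] H →ₗ[K] V}
    {d : ∀ k : ℕ, (V ⊗[K] (⨂[K]^(k+1) H)) →ₗ[K] (V ⊗[K] (⨂[K]^k H))} (hd : IsLoday ω r d)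
    (k : ℕ) (a : H) (x) :
    d (k+1) (sn V (k+1) a x) = sn V k a (d k x) + (-1 : K)^k • TT ω r (k+1) a x := by
  have : d (k+1) ∘ₗ sn V (k+1) a = sn V k a ∘ₗ d k + (-1 : K)^k • TT ω r (k+1) a := by
    apply ext_pure
    intro v hs
    simp only [LinearMap.comp_apply, LinearMap.add_apply, LinearMap.smul_apply, sn_tprod,
      TT_tprod, hd (k+1), hd k, map_add, map_sum, map_smul]
    rw [Fin.sum_univ_castSucc, Fin.sum_univ_castSucc
      (f := fun j : Fin (k+2) => ∑ i ∈ Finset.univ.filter (fun i : Fin (k+2) => i < j), _)]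
    simp only [Finset.sum_filter]
    simp only [Fin.sum_univ_castSucc (n := k+1), snoc_succAbove_castSucc, Fin.snoc_castSucc, Fin.snoc_last,
      Fin.succAbove_last, Fin.castSucc_lt_castSucc_iff, Fin.castSucc_lt_last, lt_irrefl, if_true,
      if_false, add_zero, Fin.val_castSucc, Fin.val_last, ← Fin.snoc_update, Fin.not_lt.mpr (Fin.le_last _)]
    rw [smul_sub, Finset.smul_sum]
    simp only [pow_succ, mul_neg, mul_one, neg_smul, neg_neg]
    simp only [Finset.sum_neg_distrib]
    abel
  exact LinearMap.congr_fun this x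


noncomputable def QQ (ω : H →ₗ[K] H →ₗ[K] H) (r : V →ₗ[K] H →ₗ[K] V)
    (d : ∀ k : ℕ, (V ⊗[K] (⨂[K]^(k+1) H)) →ₗ[K] (V ⊗[K] (⨂[K]^k H))) (k : ℕ) (h : H) :
    (V ⊗[K] (⨂[K]^(k+1) H)) →ₗ[K] (V ⊗[K] (⨂[K]^k H)) :=
  d k ∘ₗ TT ω r (k+1) h - TT ω r k h ∘ₗ d k

theorem QQ_sn_zero {ω : H →ₗ[K] H →ₗ[K] H} {r : V →ₗ[K] H →ₗ[K] V}
    (hR : ∀ v a b, r v (ω a b) = r (r v a) b - r (r v b) a)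
    (hL : ∀ x a b, ω x (ω a b) = ω (ω x a) b - ω (ω x b) a)
    {d : ∀ k : ℕ, (V ⊗[K] (⨂[K]^(k+1) H)) →ₗ[K] (V ⊗[K] (⨂[K]^k H))} (hd : IsLoday ω r d)
    (a h : H) (x) : QQ ω r d 0 h (sn V 0 a x) = EE r 0 (ω a h) x + EE r 0 (ω a h) x := by
  have h1 := congrArg Neg.neg (TT_comm ω r hR hL a h 0 x)
  simp only [QQ, LinearMap.sub_apply, LinearMap.comp_apply, TT_sn, d_sn_zero hd, map_sub, map_neg]
  rw [show EE r 0 (ω a h) x + EE r 0 (ω a h) x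
    = -(-EE r 0 (ω a h) x - EE r 0 (ω a h) x) by abel, ← h1]
  abel

theorem QQ_sn_succ {ω : H →ₗ[K] H →ₗ[K] H} {r : V →ₗ[K] H →ₗ[K] V}
    (hR : ∀ v a b, r v (ω a b) = r (r v a) b - r (r v b) a)
    (hL : ∀ x a b, ω x (ω a b) = ω (ω x a) b - ω (ω x b) a)
    {d : ∀ k : ℕ, (V ⊗[K] (⨂[K]^(k+1) H)) →ₗ[K] (V ⊗[K] (⨂[K]^k H))} (hd : IsLoday ω r d)
    (k : ℕ) (a h : H) (x) : QQ ω r d (k+1) h (sn V (k+1) a x) = sn V k a (QQ ω r d k h x)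
      + (-1 : K)^k • (- EE r (k+1) (ω a h) x - EE r (k+1) (ω a h) x) := by
  rw [← TT_comm ω r hR hL a h (k+1) x]
  simp only [QQ, LinearMap.sub_apply, LinearMap.comp_apply, TT_sn, d_sn_succ hd, map_sub, map_add,
    map_smul, smul_sub]
  abel

theorem dd_sn_zero {ω : H →ₗ[K] H →ₗ[K] H} {r : V →ₗ[K] H →ₗ[K] V}
    {d : ∀ k : ℕ, (V ⊗[K] (⨂[K]^(k+1) H)) →ₗ[K] (V ⊗[K] (⨂[K]^k H))} (hd : IsLoday ω r d)
    (h : H) (x) : d 0 (d 1 (sn V 1 h x)) = QQ ω r d 0 h x := by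
  simp only [QQ, LinearMap.sub_apply, LinearMap.comp_apply, d_sn_zero hd, d_sn_succ hd, map_add,
    pow_zero, one_smul]
  abel

theorem dd_sn_succ {ω : H →ₗ[K] H →ₗ[K] H} {r : V →ₗ[K] H →ₗ[K] V}
    {d : ∀ k : ℕ, (V ⊗[K] (⨂[K]^(k+1) H)) →ₗ[K] (V ⊗[K] (⨂[K]^k H))} (hd : IsLoday ω r d)
    (k : ℕ) (h : H) (x) : d (k+1) (d (k+2) (sn V (k+2) h x))
      = sn V k h (d k (d (k+1) x)) + (-1 : K)^(k+1) • QQ ω r d (k+1) h x := by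
  simp only [QQ, LinearMap.sub_apply, LinearMap.comp_apply, d_sn_succ hd, map_add, map_neg,
    map_smul, smul_sub, pow_succ, mul_neg, mul_one, neg_smul]
  abel

variable (V) in
noncomputable def Sg (e : H →ₗ[K] H) (k : ℕ) :
    (V ⊗[K] (⨂[K]^k H)) →ₗ[K] (V ⊗[K] (⨂[K]^k H)) :=
  LinearMap.lTensor V (PiTensorProduct.map (fun _ : Fin k => e))

theorem Sg_tprod (e : H →ₗ[K] H) (k : ℕ) (v : V) (hs : Fin k → H) :
    Sg V e k (v ⊗ₜ[K] tprod K hs) = v ⊗ₜ[K] tprod K (fun i => e (hs i)) := by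
  simp only [Sg, LinearMap.lTensor_tmul]
  erw [PiTensorProduct.map_tprod]

theorem Sg_sn (e : H →ₗ[K] H) (k : ℕ) (a : H) (x) :
    Sg V e (k+1) (sn V k a x) = sn V k (e a) (Sg V e k x) := by
  have : Sg V e (k+1) ∘ₗ sn V k a = sn V k (e a) ∘ₗ Sg V e k := by
    apply ext_pure
    intro v hs
    simp only [LinearMap.comp_apply, sn_tprod, Sg_tprod]
    congr 2
    ext t
    refine Fin.lastCases ?_ (fun t => ?_) t <;> simp
  exact LinearMap.congr_fun this x

theorem Sg_EE (e : H →ₗ[K] H) (r : V →ₗ[K] H →ₗ[K] V) (k : ℕ) (u : H) (x) :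
    Sg V e k (EE r k u x) = EE r k u (Sg V e k x) := by
  have : Sg V e k ∘ₗ EE r k u = EE r k u ∘ₗ Sg V e k := by
    apply ext_pure
    intro v hs
    simp only [LinearMap.comp_apply, EE_tprod, Sg_tprod]
  exact LinearMap.congr_fun this x

theorem EE_e {ω : H →ₗ[K] H →ₗ[K] H} {r : V →ₗ[K] H →ₗ[K] V}
    (hR : ∀ v a b, r v (ω a b) = r (r v a) b - r (r v b) a)
    (e : H →ₗ[K] H) (he : ∀ v h, r v (e h) = r v h) (k : ℕ) (a b : H) :
    EE r k (ω (e a) (e b)) = EE r k (ω a b) := by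
  apply ext_pure
  intro v hs
  simp only [EE_tprod, hR, he]

theorem Sg_QQ {ω : H →ₗ[K] H →ₗ[K] H} {r : V →ₗ[K] H →ₗ[K] V}
    (hR : ∀ v a b, r v (ω a b) = r (r v a) b - r (r v b) a)
    (hL : ∀ x a b, ω x (ω a b) = ω (ω x a) b - ω (ω x b) a)
    {d : ∀ k : ℕ, (V ⊗[K] (⨂[K]^(k+1) H)) →ₗ[K] (V ⊗[K] (⨂[K]^k H))} (hd : IsLoday ω r d)
    (e : H →ₗ[K] H) (he : ∀ v h, r v (e h) = r v h) (h : H) (k : ℕ) :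
    Sg V e k ∘ₗ QQ ω r d k h = QQ ω r d k (e h) ∘ₗ Sg V e (k+1) := by
  induction k with
  | zero =>
    apply ext_sn
    intro a x
    simp only [LinearMap.comp_apply, QQ_sn_zero hR hL hd, map_add, Sg_EE, Sg_sn, EE_e hR e he]
  | succ k ih =>
    apply ext_sn
    intro a x
    have h1 := LinearMap.congr_fun ih x
    simp only [LinearMap.comp_apply] at h1
    simp only [LinearMap.comp_apply, QQ_sn_succ hR hL hd, map_add, map_smul, map_sub, map_neg,
      Sg_EE, Sg_sn, EE_e hR e he, h1]

theorem Sg_dd {ω : H →ₗ[K] H →ₗ[K] H} {r : V →ₗ[K] H →ₗ[K] V}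
    (hR : ∀ v a b, r v (ω a b) = r (r v a) b - r (r v b) a)
    (hL : ∀ x a b, ω x (ω a b) = ω (ω x a) b - ω (ω x b) a)
    {d : ∀ k : ℕ, (V ⊗[K] (⨂[K]^(k+1) H)) →ₗ[K] (V ⊗[K] (⨂[K]^k H))} (hd : IsLoday ω r d)
    (e : H →ₗ[K] H) (he : ∀ v h, r v (e h) = r v h) (k : ℕ) :
    Sg V e k ∘ₗ d k ∘ₗ d (k+1) = d k ∘ₗ d (k+1) ∘ₗ Sg V e (k+2) := by
  induction k with
  | zero =>
    apply ext_sn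
    intro a x
    have h1 := LinearMap.congr_fun (Sg_QQ hR hL hd e he a 0) x
    simp only [LinearMap.comp_apply] at h1
    simp only [LinearMap.comp_apply, Sg_sn]
    rw [dd_sn_zero hd, dd_sn_zero hd, h1]
  | succ k ih =>
    apply ext_sn
    intro a x
    have h1 := LinearMap.congr_fun (Sg_QQ hR hL hd e he a (k+1)) x
    have h2 := LinearMap.congr_fun ih x
    simp only [LinearMap.comp_apply] at h1 h2
    simp only [LinearMap.comp_apply, Sg_sn]
    rw [dd_sn_succ hd, dd_sn_succ hd, map_add, map_smul, h1, Sg_sn, h2]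

end aux

section fil
variable {K : Type} [Field K] {g : Type} [AddCommGroup g] [Module K g]

theorem hR_of {m : ℕ} (br : MultilinearMap K (fun _ : Fin (m+1) => g) g)
    (fund : ∀ (x : Fin (m+1) → g) (y : Fin m → g),
      br (Fin.cons (br x) y)
        = ∑ i : Fin (m+1), br (Function.update x i (br (Fin.cons (x i) y))))
    (ω₁ : (⨂[K]^m g) →ₗ[K] (⨂[K]^m g) →ₗ[K] (⨂[K]^m g))
    (hω₁ : ∀ a b : Fin m → g,
      ω₁ (tprod K a) (tprod K b)
        = ∑ i : Fin m, tprod K (Function.update a i (br (Fin.cons (a i) b))))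
    (ωrD : g →ₗ[K] (⨂[K]^m g) →ₗ[K] g)
    (hωrD : ∀ (x : g) (a : Fin m → g), ωrD x (tprod K a) = br (Fin.cons x a))
    (v : g) (a b : ⨂[K]^m g) : ωrD v (ω₁ a b) = ωrD (ωrD v a) b - ωrD (ωrD v b) a := by
  have : ω₁.compr₂ (ωrD v) = ωrD ∘ₗ ωrD v - (ωrD ∘ₗ ωrD v).flip := by
    apply PiTensorProduct.ext
    ext a : 1
    apply PiTensorProduct.ext
    ext b
    simp only [LinearMap.compMultilinearMap_apply, LinearMap.compr₂_apply, LinearMap.sub_apply,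
      LinearMap.comp_apply, LinearMap.flip_apply, hω₁, hωrD, map_sum, fund (Fin.cons v a) b]
    rw [Fin.sum_univ_succ]
    simp [Fin.cons_update]
  exact LinearMap.congr_fun₂ this a b

theorem ω₁_gen {m : ℕ} (br : MultilinearMap K (fun _ : Fin (m+1) => g) g)
    (ω₁ : (⨂[K]^m g) →ₗ[K] (⨂[K]^m g) →ₗ[K] (⨂[K]^m g))
    (hω₁ : ∀ a b : Fin m → g,
      ω₁ (tprod K a) (tprod K b)
        = ∑ i : Fin m, tprod K (Function.update a i (br (Fin.cons (a i) b))))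
    (ωrD : g →ₗ[K] (⨂[K]^m g) →ₗ[K] g)
    (hωrD : ∀ (x : g) (a : Fin m → g), ωrD x (tprod K a) = br (Fin.cons x a))
    (a : Fin m → g) (b : ⨂[K]^m g) : ω₁ (tprod K a) b
      = ∑ i : Fin m, tprod K (Function.update a i (ωrD (a i) b)) := by
  have : ω₁ (tprod K a) = ∑ i : Fin m,
      ((tprod K : MultilinearMap K (fun _ : Fin m => g) _).toLinearMap a i) ∘ₗ (ωrD (a i)) := by
    apply PiTensorProduct.ext
    ext b
    simp only [LinearMap.compMultilinearMap_apply, LinearMap.sum_apply, hω₁]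
    refine Finset.sum_congr rfl fun i _ => ?_
    simp [hωrD]
  rw [this]
  simp

theorem hL_of {m : ℕ}
    (ω₁ : (⨂[K]^m g) →ₗ[K] (⨂[K]^m g) →ₗ[K] (⨂[K]^m g))
    (ωrD : g →ₗ[K] (⨂[K]^m g) →ₗ[K] g)
    (hω : ∀ (a : Fin m → g) (b : ⨂[K]^m g), ω₁ (tprod K a) b
      = ∑ i : Fin m, tprod K (Function.update a i (ωrD (a i) b)))
    (hR : ∀ v a b, ωrD v (ω₁ a b) = ωrD (ωrD v a) b - ωrD (ωrD v b) a)
    (x a b : ⨂[K]^m g) : ω₁ x (ω₁ a b) = ω₁ (ω₁ x a) b - ω₁ (ω₁ x b) a := by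
  have : ω₁.flip (ω₁ a b) = ω₁.flip b ∘ₗ ω₁.flip a - ω₁.flip a ∘ₗ ω₁.flip b := by
    apply PiTensorProduct.ext
    ext x
    simp only [LinearMap.compMultilinearMap_apply, LinearMap.sub_apply,
      LinearMap.comp_apply, LinearMap.flip_apply, hω, map_sum, hR,
      MultilinearMap.map_update_sub]
    have key : ∀ a b : ⨂[K]^m g, (∑ i : Fin m, ∑ j : Fin m, tprod K
        (Function.update (Function.update x i (ωrD (x i) a)) j
          (ωrD (Function.update x i (ωrD (x i) a) j) b)))
        = (∑ i : Fin m, tprod K (Function.update x i (ωrD (ωrD (x i) a) b)))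
          + ∑ i : Fin m, ∑ j : Fin m, if i = j then 0 else tprod K
            (Function.update (Function.update x i (ωrD (x i) a)) j (ωrD (x j) b)) := by
      intro a b
      rw [← Finset.sum_add_distrib]
      refine Finset.sum_congr rfl fun i _ => ?_
      rw [← Finset.add_sum_erase _ _ (Finset.mem_univ i),
        ← Finset.add_sum_erase Finset.univ (fun j => if i = j then 0 else _) (Finset.mem_univ i)]
      simp only [Function.update_self, Function.update_idem, if_true, zero_add]
      congr 1
      refine Finset.sum_congr rfl fun j hj => ?_
      have hij : j ≠ i := Finset.ne_of_mem_erase hj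
      rw [if_neg hij.symm, Function.update_of_ne hij]
    have sym : (∑ i : Fin m, ∑ j : Fin m, if i = j then 0 else tprod K
            (Function.update (Function.update x i (ωrD (x i) a)) j (ωrD (x j) b)))
        = ∑ i : Fin m, ∑ j : Fin m, if i = j then 0 else tprod K
            (Function.update (Function.update x i (ωrD (x i) b)) j (ωrD (x j) a)) := by
      rw [Finset.sum_comm]
      refine Finset.sum_congr rfl fun i _ => Finset.sum_congr rfl fun j _ => ?_
      by_cases h : i = j
      · simp [h]
      · rw [if_neg h, if_neg (Ne.symm h), Function.update_comm h]
    rw [key a b, key b a, sym, Finset.sum_sub_distrib]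
    abel
  exact LinearMap.congr_fun this x

end fil

section les
variable {K : Type} [Field K]

section hq
variable {N : Type} [AddCommGroup N] [Module K N] {Z : Submodule K N} {B : Submodule K Z}

noncomputable def HqOf.mkL : Z →ₗ[K] HqOf K N Z B := B.mkQ

theorem HqOf.mkL_apply (x : Z) : HqOf.mkL (B := B) x = HqOf.mk K N x := rfl

noncomputable def HqOf.lift {W : Type} [AddCommGroup W] [Module K W] (f : Z →ₗ[K] W)
    (hf : ∀ x ∈ B, f x = 0) : HqOf K N Z B →ₗ[K] W :=
  B.liftQ f (fun x hx => hf x hx)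

theorem HqOf.lift_mk {W : Type} [AddCommGroup W] [Module K W] (f : Z →ₗ[K] W)
    (hf : ∀ x ∈ B, f x = 0) (x : Z) : HqOf.lift f hf (HqOf.mk K N x) = f x := rfl

theorem HqOf.mk_surj (y : HqOf K N Z B) : ∃ x : Z, HqOf.mk K N x = y :=
  Submodule.Quotient.mk_surjective B y

theorem HqOf.mk_eq_zero (x : Z) : HqOf.mk K N (B := B) x = 0 ↔ x ∈ B :=
  Submodule.Quotient.mk_eq_zero B

theorem HqOf.mk_eq (x y : Z) : HqOf.mk K N (B := B) x = HqOf.mk K N y ↔ x - y ∈ B :=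
  Submodule.Quotient.eq B
end hq

variable (C C' : ℕ → Type) [∀ k, AddCommGroup (C k)]
    [∀ k, Module K (C k)] [∀ k, AddCommGroup (C' k)] [∀ k, Module K (C' k)]
    (d : ∀ k, C (k+1) →ₗ[K] C k) (d' : ∀ k, C' (k+1) →ₗ[K] C' k) (P : ∀ k, C k →ₗ[K] C' k)

theorem relCycles_le (k : ℕ) : relCyclesC K C C' d P k ≤ cyclesC K C d (k+1) :=
  fun _ hx => hx.2

theorem P_cycles (comm : ∀ k x, P k (d k x) = d' k (P (k+1) x)) (k : ℕ) :
    ∀ x ∈ cyclesC K C d k, P k x ∈ cyclesC K C' d' k := by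
  cases k with
  | zero => intro x _; exact Submodule.mem_top
  | succ k =>
    intro x hx
    have hx : d k x = 0 := hx
    show d' k _ = 0
    rw [← comm, hx, map_zero]

noncomputable def incL (k : ℕ) : relHomologyC K C C' d P k →ₗ[K] homologyC K C d (k+1) :=
  HqOf.lift (HqOf.mkL ∘ₗ Submodule.inclusion (relCycles_le C C' d P k)) (by
    rintro ⟨x, hx⟩ ⟨w, -, hw⟩
    rw [LinearMap.comp_apply, HqOf.mkL_apply, HqOf.mk_eq_zero]
    exact ⟨w, hw⟩)

noncomputable def projL (comm : ∀ k x, P k (d k x) = d' k (P (k+1) x)) (k : ℕ) :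
    homologyC K C d k →ₗ[K] homologyC K C' d' k :=
  HqOf.lift (HqOf.mkL ∘ₗ (P k).restrict (P_cycles C C' d d' P comm k)) (by
    rintro ⟨x, hx⟩ ⟨w, hw⟩
    rw [LinearMap.comp_apply, HqOf.mkL_apply, HqOf.mk_eq_zero]
    refine ⟨P (k+1) w, ?_⟩
    rw [← comm, hw]
    rfl)

/-- Elements on which the connecting map can be computed. -/
def preC (k : ℕ) : Submodule K (C (k+2)) :=
  LinearMap.ker (P (k+1) ∘ₗ d (k+1)) ⊓ LinearMap.ker (d k ∘ₗ d (k+1))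

theorem pre_rel (k : ℕ) (x) (hx : x ∈ preC C C' d P k) :
    d (k+1) x ∈ relCyclesC K C C' d P k := ⟨hx.1, hx.2⟩

noncomputable def preToRel (k : ℕ) : preC C C' d P k →ₗ[K] relHomologyC K C C' d P k :=
  HqOf.mkL ∘ₗ (d (k+1)).restrict (p := preC C C' d P k) (q := relCyclesC K C C' d P k)
    (fun _ hx => ⟨hx.1, hx.2⟩)

theorem preToRel_apply (k : ℕ) (x) (hx : x ∈ preC C C' d P k) :
    preToRel C C' d P k ⟨x, hx⟩ = HqOf.mk K (C (k+1)) ⟨d (k+1) x, pre_rel C C' d P k x hx⟩ := rfl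

theorem exists_conn (surj : ∀ k, Function.Surjective (P k))
    (comm : ∀ k x, P k (d k x) = d' k (P (k+1) x))
    (strict : ∀ k w, P k (d k (d (k+1) w)) = 0 →
      ∃ n, P (k+2) n = 0 ∧ d k (d (k+1) n) = d k (d (k+1) w)) (k : ℕ) :
    ∃ conn : homologyC K C' d' (k+2) →ₗ[K] relHomologyC K C C' d P k,
      ∀ (x : C (k+2)) (hx : x ∈ preC C C' d P k) (hz : P (k+2) x ∈ cyclesC K C' d' (k+2)),
        conn (HqOf.mk K (C' (k+2)) ⟨P (k+2) x, hz⟩)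
          = HqOf.mk K (C (k+1)) ⟨d (k+1) x, pre_rel C C' d P k x hx⟩ := by
  have hP : ∀ x ∈ preC C C' d P k, P (k+2) x ∈ cyclesC K C' d' (k+2) := by
    intro x hx
    have h1 : P (k+1) (d (k+1) x) = 0 := hx.1
    show d' (k+1) _ = 0
    rw [← comm, h1]
  let p := (P (k+2)).restrict hP
  have psurj : Function.Surjective p := by
    rintro ⟨z, hz⟩
    have hz' : d' (k+1) z = 0 := hz
    obtain ⟨x, rfl⟩ := surj (k+2) z
    have h1 : P (k+1) (d (k+1) x) = 0 := by rw [comm, hz']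
    obtain ⟨n, hn, hnd⟩ := strict k x (by rw [comm, h1, map_zero])
    refine ⟨⟨x - n, ?_, ?_⟩, ?_⟩
    · show P (k+1) (d (k+1) (x - n)) = 0
      rw [comm, map_sub, hn, sub_zero, hz']
    · show d k (d (k+1) (x - n)) = 0
      rw [map_sub, map_sub, hnd, sub_self]
    · apply Subtype.ext
      show P (k+2) (x - n) = P (k+2) x
      rw [map_sub, hn, sub_zero]
  obtain ⟨ρ, hρ⟩ := LinearMap.exists_rightInverse_of_surjective p (LinearMap.range_eq_top.2 psurj)
  -- independence of the lift
  have indep : ∀ y : preC C C' d P k, P (k+2) y = 0 → preToRel C C' d P k y = 0 := by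
    rintro ⟨y, hy⟩ h0
    rw [preToRel_apply, HqOf.mk_eq_zero]
    exact ⟨y, h0, rfl⟩
  have key : ∀ x : preC C C' d P k, preToRel C C' d P k (ρ (p x)) = preToRel C C' d P k x := by
    intro x
    rw [← sub_eq_zero, ← map_sub]
    apply indep
    have h2 := LinearMap.congr_fun hρ (p x)
    have h3 : P (k+2) (ρ (p x)) = P (k+2) x := congrArg Subtype.val h2
    show P (k+2) ((ρ (p x) : C (k+2)) - x) = 0
    rw [map_sub, h3, sub_self]
  refine ⟨HqOf.lift (preToRel C C' d P k ∘ₗ ρ) ?_, ?_⟩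
  · rintro ⟨z, hz⟩ ⟨y, hy⟩
    have hz' : d' (k+1) z = 0 := hz
    have hy : d' (k+2) y = z := hy
    obtain ⟨w, rfl⟩ := surj (k+3) y
    obtain ⟨n, hn, hnd⟩ := strict (k+1) w (by rw [comm, comm, hy, hz'])
    have hdd : d (k+1) (d (k+2) (w - n)) = 0 := by rw [map_sub, map_sub, hnd, sub_self]
    have hmem : d (k+2) (w - n) ∈ preC C C' d P k := by
      refine ⟨?_, ?_⟩
      · show P (k+1) (d (k+1) (d (k+2) (w - n))) = 0
        rw [hdd, map_zero]
      · show d k (d (k+1) (d (k+2) (w - n))) = 0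
        rw [hdd, map_zero]
    have hpz : (⟨z, hz⟩ : cyclesC K C' d' (k+2)) = p ⟨_, hmem⟩ := by
      apply Subtype.ext
      show z = P (k+2) (d (k+2) (w - n))
      rw [comm, map_sub, hn, sub_zero, hy]
    rw [LinearMap.comp_apply, hpz, key, preToRel_apply, HqOf.mk_eq_zero]
    exact ⟨0, Submodule.zero_mem _, by rw [map_zero]; exact hdd.symm⟩
  · intro x hx hz
    rw [HqOf.lift_mk]
    exact key ⟨x, hx⟩

theorem les_main (surj : ∀ k, Function.Surjective (P k))
    (comm : ∀ k x, P k (d k x) = d' k (P (k+1) x))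
    (strict : ∀ k w, P k (d k (d (k+1) w)) = 0 →
      ∃ n, P (k+2) n = 0 ∧ d k (d (k+1) n) = d k (d (k+1) w))
    (inj : Function.Injective (P 0)) :
    ∃ (inc : ∀ k : ℕ, relHomologyC K C C' d P k →ₗ[K] homologyC K C d (k+1))
      (proj : ∀ k : ℕ, homologyC K C d k →ₗ[K] homologyC K C' d' k)
      (conn : ∀ k : ℕ, homologyC K C' d' (k+2) →ₗ[K] relHomologyC K C C' d P k),
      (∀ (k : ℕ) (x : C (k+1)) (h₁ : x ∈ relCyclesC K C C' d P k)
          (h₂ : x ∈ cyclesC K C d (k+1)),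
        inc k (HqOf.mk K (C (k+1)) ⟨x, h₁⟩) = HqOf.mk K (C (k+1)) ⟨x, h₂⟩) ∧
      (∀ (k : ℕ) (x : C k) (h₁ : x ∈ cyclesC K C d k) (h₂ : P k x ∈ cyclesC K C' d' k),
        proj k (HqOf.mk K (C k) ⟨x, h₁⟩) = HqOf.mk K (C' k) ⟨P k x, h₂⟩) ∧
      (∀ k : ℕ, Function.Exact (conn k) (inc k)) ∧
      (∀ k : ℕ, Function.Exact (inc k) (proj (k+1))) ∧
      (∀ k : ℕ, Function.Exact (proj (k+2)) (conn k)) ∧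
      Function.Surjective (proj 1) ∧
      Function.Bijective (proj 0) := by
  choose conn hconn using exists_conn C C' d d' P surj comm strict
  have hinc : ∀ (k : ℕ) (x : C (k+1)) (h₁ : x ∈ relCyclesC K C C' d P k)
          (h₂ : x ∈ cyclesC K C d (k+1)),
        incL C C' d P k (HqOf.mk K (C (k+1)) ⟨x, h₁⟩) = HqOf.mk K (C (k+1)) ⟨x, h₂⟩ :=
    fun _ _ _ _ => rfl
  have hproj : ∀ (k : ℕ) (x : C k) (h₁ : x ∈ cyclesC K C d k) (h₂ : P k x ∈ cyclesC K C' d' k),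
        projL C C' d d' P comm k (HqOf.mk K (C k) ⟨x, h₁⟩) = HqOf.mk K (C' k) ⟨P k x, h₂⟩ :=
    fun _ _ _ _ => rfl
  have Pc := P_cycles C C' d d' P comm
  -- good lifts of cycles
  have lift : ∀ k z, z ∈ cyclesC K C' d' (k+2) → ∃ x ∈ preC C C' d P k, P (k+2) x = z := by
    intro k z hz
    have hz' : d' (k+1) z = 0 := hz
    obtain ⟨x, rfl⟩ := surj (k+2) z
    have h1 : P (k+1) (d (k+1) x) = 0 := by rw [comm, hz']
    obtain ⟨n, hn, hnd⟩ := strict k x (by rw [comm, h1, map_zero])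
    refine ⟨x - n, ⟨?_, ?_⟩, ?_⟩
    · show P (k+1) (d (k+1) (x - n)) = 0
      rw [comm, map_sub, hn, sub_zero, hz']
    · show d k (d (k+1) (x - n)) = 0
      rw [map_sub, map_sub, hnd, sub_self]
    · rw [map_sub, hn, sub_zero]
  refine ⟨incL C C' d P, projL C C' d d' P comm, conn, hinc, hproj, ?_, ?_, ?_, ?_, ?_, ?_⟩
  · intro k y
    obtain ⟨⟨x, hx⟩, rfl⟩ := HqOf.mk_surj y
    rw [hinc k x hx (relCycles_le C C' d P k hx), HqOf.mk_eq_zero]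
    constructor
    · rintro ⟨w, hw⟩
      have hw : d (k+1) w = x := hw
      subst hw
      have hm : w ∈ preC C C' d P k := ⟨hx.1, hx.2⟩
      have hz : P (k+2) w ∈ cyclesC K C' d' (k+2) := by
        show d' (k+1) _ = 0
        rw [← comm]; exact hx.1
      exact ⟨_, hconn k w hm hz⟩
    · rintro ⟨z, hz⟩
      obtain ⟨⟨z, hzc⟩, rfl⟩ := HqOf.mk_surj z
      obtain ⟨w, hw, rfl⟩ := lift k z hzc
      rw [hconn k w hw hzc, HqOf.mk_eq] at hz
      obtain ⟨n, -, hn⟩ := hz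
      have hn : d (k+1) n = d (k+1) w - x := hn
      exact ⟨w - n, by rw [map_sub, hn]; exact sub_sub_cancel _ _⟩
  · intro k y
    obtain ⟨⟨x, hx⟩, rfl⟩ := HqOf.mk_surj y
    rw [hproj (k+1) x hx (Pc _ _ hx), HqOf.mk_eq_zero]
    have hx' : d k x = 0 := hx
    constructor
    · rintro ⟨y, hy⟩
      have hy : d' (k+1) y = P (k+1) x := hy
      obtain ⟨w, rfl⟩ := surj (k+2) y
      obtain ⟨n, hn, hnd⟩ := strict k w (by rw [comm, comm, hy, ← comm, hx', map_zero])
      have hr : x - d (k+1) (w - n) ∈ relCyclesC K C C' d P k := by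
        refine ⟨?_, ?_⟩
        · show P (k+1) (x - d (k+1) (w - n)) = 0
          rw [map_sub, comm, map_sub, hn, sub_zero, hy, sub_self]
        · show d k (x - d (k+1) (w - n)) = 0
          rw [map_sub, hx', map_sub, map_sub, hnd, sub_self, sub_zero]
      refine ⟨HqOf.mk K (C (k+1)) ⟨_, hr⟩, ?_⟩
      rw [hinc k _ hr (relCycles_le C C' d P k hr), HqOf.mk_eq]
      refine ⟨-(w - n), ?_⟩
      rw [map_neg]
      show _ = (x - d (k+1) (w - n)) - x
      abel
    · rintro ⟨y, hy⟩
      obtain ⟨⟨n, hn⟩, rfl⟩ := HqOf.mk_surj y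
      rw [hinc k n hn (relCycles_le C C' d P k hn), HqOf.mk_eq] at hy
      obtain ⟨w, hw⟩ := hy
      have hw : d (k+1) w = n - x := hw
      have hn1 : P (k+1) n = 0 := hn.1
      refine ⟨-P (k+2) w, ?_⟩
      rw [map_neg, ← comm, hw, map_sub, hn1, zero_sub, neg_neg]
      rfl
  · intro k y
    obtain ⟨⟨z, hz⟩, rfl⟩ := HqOf.mk_surj y
    constructor
    · intro h0
      obtain ⟨x, hx, rfl⟩ := lift k z hz
      rw [hconn k x hx hz, HqOf.mk_eq_zero] at h0
      obtain ⟨n, hn, hnd⟩ := h0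
      have hn : P (k+2) n = 0 := hn
      have hnd : d (k+1) n = d (k+1) x := hnd
      have hc : x - n ∈ cyclesC K C d (k+2) := by
        show d (k+1) (x - n) = 0
        rw [map_sub, hnd, sub_self]
      refine ⟨HqOf.mk K (C (k+2)) ⟨x - n, hc⟩, ?_⟩
      rw [hproj (k+2) _ hc (Pc _ _ hc)]
      congr 2
      rw [map_sub, hn, sub_zero]
    · rintro ⟨y, hy⟩
      obtain ⟨⟨x, hx⟩, rfl⟩ := HqOf.mk_surj y
      rw [hproj (k+2) x hx (Pc _ _ hx)] at hy
      rw [← hy]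
      have hx' : d (k+1) x = 0 := hx
      have hm : x ∈ preC C C' d P k := by
        refine ⟨?_, ?_⟩
        · show P (k+1) (d (k+1) x) = 0
          rw [hx', map_zero]
        · show d k (d (k+1) x) = 0
          rw [hx', map_zero]
      rw [hconn k x hm (Pc _ _ hx), HqOf.mk_eq_zero]
      exact ⟨0, Submodule.zero_mem _, by rw [map_zero]; exact hx'.symm⟩
  · intro y
    obtain ⟨⟨z, hz⟩, rfl⟩ := HqOf.mk_surj y
    obtain ⟨x, rfl⟩ := surj 1 z
    have hc : x ∈ cyclesC K C d 1 := by
      show d 0 x = 0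
      apply inj
      rw [comm, map_zero]; exact hz
    exact ⟨HqOf.mk K (C 1) ⟨x, hc⟩, hproj 1 x hc hz⟩
  · rw [injective_iff_map_eq_zero]
    intro y hy
    obtain ⟨⟨x, hx⟩, rfl⟩ := HqOf.mk_surj y
    rw [hproj 0 x hx (Pc _ _ hx), HqOf.mk_eq_zero] at hy
    obtain ⟨y, hy⟩ := hy
    have hy : d' 0 y = P 0 x := hy
    obtain ⟨w, rfl⟩ := surj 1 y
    rw [HqOf.mk_eq_zero]
    exact ⟨w, inj (by rw [comm, hy]; rfl)⟩
  · intro y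
    obtain ⟨⟨z, hz⟩, rfl⟩ := HqOf.mk_surj y
    obtain ⟨x, rfl⟩ := surj 0 z
    exact ⟨HqOf.mk K (C 0) ⟨x, Submodule.mem_top⟩, hproj 0 x Submodule.mem_top hz⟩

end les

set_option maxHeartbeats 2000000 in
/-- Let `g` be an `n`-Filippov algebra over a field `K` of characteristic
`≠ 2`, with `n > 2` (write `n = m+1`, `2 ≤ m`) and `dim_K g ≥ n`.  The canonical projections
`π₁ᵏ : g ⊗ Dₙ(g)^{⊗(k+1)} → g ⊗ Lₙ(g)^{⊗(k+1)}` are surjective and commute with the Loday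
boundaries of `ₙCL_*(g)` and `ₙC_*(g)`, so that `0 → ₙC^rel_*(g) → ₙCL_*(g) → ₙC_*(g) → 0`
is a short exact sequence of chain complexes, where `ₙC^rel_k(g) := ker π₁ᵏ`.  Consequently
there is a long exact sequence
`⋯ → ₙH^rel_{k-1}(g) → ₙHL_k(g;K) → ₙH^Lie_k(g;K) → ₙH^rel_{k-2}(g) → ⋯
  → ₙH^rel_0(g) → ₙHL_1(g;K) → ₙH^Lie_1(g;K) → 0`,
and the induced map `ₙHL_0(g;K) → ₙH^Lie_0(g;K)` is an isomorphism. -/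
theorem statement8 (K : Type) [Field K] (hchar : ringChar K ≠ 2)
    (g : Type) [AddCommGroup g] [Module K g] (m : ℕ) (hm : 2 ≤ m)
    (hdim : ((m + 1 : ℕ) : Cardinal) ≤ Module.rank K g)
    (br : MultilinearMap K (fun _ : Fin (m+1) => g) g)
    (fund : ∀ (x : Fin (m+1) → g) (y : Fin m → g),
      br (Fin.cons (br x) y)
        = ∑ i : Fin (m+1), br (Function.update x i (br (Fin.cons (x i) y))))
    (alt : ∀ (x : Fin (m+1) → g) (i j : Fin (m+1)), i ≠ j → x i = x j → br x = 0)
    -- the Leibniz brackets ω₁ on Dₙ(g) and ω̄₀ on Lₙ(g)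
    (ω₁ : (⨂[K]^m g) →ₗ[K] (⨂[K]^m g) →ₗ[K] (⨂[K]^m g))
    (hω₁ : ∀ a b : Fin m → g,
      ω₁ (tprod K a) (tprod K b)
        = ∑ i : Fin m, tprod K (Function.update a i (br (Fin.cons (a i) b))))
    (ω₀bar : (⋀[K]^m g) →ₗ[K] (⋀[K]^m g) →ₗ[K] (⋀[K]^m g))
    (hω₀bar : ∀ a b : Fin m → g,
      ω₀bar (wedge K a) (wedge K b)
        = ∑ i : Fin m, wedge K (Function.update a i (br (Fin.cons (a i) b))))
    -- the right co-representation actions of Dₙ(g) and Lₙ(g) on g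
    (ωrD : g →ₗ[K] (⨂[K]^m g) →ₗ[K] g)
    (hωrD : ∀ (x : g) (a : Fin m → g), ωrD x (tprod K a) = br (Fin.cons x a))
    (ωrL : g →ₗ[K] (⋀[K]^m g) →ₗ[K] g)
    (hωrL : ∀ (x : g) (a : Fin m → g), ωrL x (wedge K a) = br (Fin.cons x a))
    -- the Loday boundary of ₙCL_*(g) = CL_*(Dₙ(g), g)
    (dD : ∀ k : ℕ, (g ⊗[K] (⨂[K]^(k+1) (⨂[K]^m g))) →ₗ[K] (g ⊗[K] (⨂[K]^k (⨂[K]^m g))))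
    (hdD : ∀ (k : ℕ) (v : g) (hs : Fin (k+1) → (⨂[K]^m g)),
      dD k (v ⊗ₜ[K] tprod K hs)
        = (∑ j : Fin (k+1), ((-1 : K)^((j : ℕ)+1)) •
            ((ωrD v (hs j)) ⊗ₜ[K] tprod K (fun t => hs (j.succAbove t))))
        + ∑ j : Fin (k+1), ∑ i ∈ Finset.univ.filter (fun i : Fin (k+1) => i < j),
            ((-1 : K)^((j : ℕ))) •
              (v ⊗ₜ[K] tprod K
                (fun t => Function.update hs i (ω₁ (hs i) (hs j)) (j.succAbove t))))
    -- the Loday boundary of ₙC_*(g) = CL_*(Lₙ(g), g)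
    (dL : ∀ k : ℕ, (g ⊗[K] (⨂[K]^(k+1) (⋀[K]^m g))) →ₗ[K] (g ⊗[K] (⨂[K]^k (⋀[K]^m g))))
    (hdL : ∀ (k : ℕ) (v : g) (hs : Fin (k+1) → (⋀[K]^m g)),
      dL k (v ⊗ₜ[K] tprod K hs)
        = (∑ j : Fin (k+1), ((-1 : K)^((j : ℕ)+1)) •
            ((ωrL v (hs j)) ⊗ₜ[K] tprod K (fun t => hs (j.succAbove t))))
        + ∑ j : Fin (k+1), ∑ i ∈ Finset.univ.filter (fun i : Fin (k+1) => i < j),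
            ((-1 : K)^((j : ℕ))) •
              (v ⊗ₜ[K] tprod K
                (fun t => Function.update hs i (ω₀bar (hs i) (hs j)) (j.succAbove t))))
    -- the canonical projection π : Dₙ(g) → Lₙ(g) and the induced projections π₁ᵏ
    (π : (⨂[K]^m g) →ₗ[K] ⋀[K]^m g)
    (hπ : ∀ a : Fin m → g, π (tprod K a) = wedge K a)
    (P₁ : ∀ k : ℕ, (g ⊗[K] (⨂[K]^k (⨂[K]^m g))) →ₗ[K] (g ⊗[K] (⨂[K]^k (⋀[K]^m g))))
    (hP₁ : ∀ (k : ℕ) (v : g) (hs : Fin k → (⨂[K]^m g)),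
      P₁ k (v ⊗ₜ[K] tprod K hs) = v ⊗ₜ[K] tprod K (fun i => π (hs i))) :
    -- the projections are surjective …
    (∀ k : ℕ, Function.Surjective (P₁ k)) ∧
    -- … and commute with the Loday boundaries (short exact sequence of chain complexes,
    -- the kernel subcomplex being `ₙC^rel_*(g)`) …
    (∀ k : ℕ, (P₁ k) ∘ₗ (dD k) = (dL k) ∘ₗ (P₁ (k+1))) ∧
    -- … consequently there is a long exact sequence as stated
    (∃ (inc : ∀ k : ℕ,
          (relHomologyC K (fun k => g ⊗[K] (⨂[K]^k (⨂[K]^m g)))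
              (fun k => g ⊗[K] (⨂[K]^k (⋀[K]^m g))) dD P₁ k) →ₗ[K]
            (homologyC K (fun k => g ⊗[K] (⨂[K]^k (⨂[K]^m g))) dD (k+1)))
        (proj : ∀ k : ℕ,
          (homologyC K (fun k => g ⊗[K] (⨂[K]^k (⨂[K]^m g))) dD k) →ₗ[K]
            (homologyC K (fun k => g ⊗[K] (⨂[K]^k (⋀[K]^m g))) dL k))
        (conn : ∀ k : ℕ,
          (homologyC K (fun k => g ⊗[K] (⨂[K]^k (⋀[K]^m g))) dL (k+2)) →ₗ[K]
            (relHomologyC K (fun k => g ⊗[K] (⨂[K]^k (⨂[K]^m g)))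
              (fun k => g ⊗[K] (⨂[K]^k (⋀[K]^m g))) dD P₁ k)),
      -- `inc` is induced by the inclusion of the kernel subcomplex
      (∀ (k : ℕ) (x : g ⊗[K] (⨂[K]^(k+1) (⨂[K]^m g)))
          (h₁ : x ∈ relCyclesC K (fun k => g ⊗[K] (⨂[K]^k (⨂[K]^m g)))
            (fun k => g ⊗[K] (⨂[K]^k (⋀[K]^m g))) dD P₁ k)
          (h₂ : x ∈ cyclesC K (fun k => g ⊗[K] (⨂[K]^k (⨂[K]^m g))) dD (k+1)),
        inc k (HqOf.mk K (g ⊗[K] (⨂[K]^(k+1) (⨂[K]^m g))) ⟨x, h₁⟩)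
          = HqOf.mk K (g ⊗[K] (⨂[K]^(k+1) (⨂[K]^m g))) ⟨x, h₂⟩) ∧
      -- `proj` is induced by the projections `π₁`
      (∀ (k : ℕ) (x : g ⊗[K] (⨂[K]^k (⨂[K]^m g)))
          (h₁ : x ∈ cyclesC K (fun k => g ⊗[K] (⨂[K]^k (⨂[K]^m g))) dD k)
          (h₂ : P₁ k x ∈ cyclesC K (fun k => g ⊗[K] (⨂[K]^k (⋀[K]^m g))) dL k),
        proj k (HqOf.mk K (g ⊗[K] (⨂[K]^k (⨂[K]^m g))) ⟨x, h₁⟩)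
          = HqOf.mk K (g ⊗[K] (⨂[K]^k (⋀[K]^m g))) ⟨P₁ k x, h₂⟩) ∧
      -- exactness of `⋯ → ₙH^Lie_{k+2} → ₙH^rel_k → ₙHL_{k+1} → ₙH^Lie_{k+1} → ⋯`
      (∀ k : ℕ, Function.Exact (conn k) (inc k)) ∧
      (∀ k : ℕ, Function.Exact (inc k) (proj (k+1))) ∧
      (∀ k : ℕ, Function.Exact (proj (k+2)) (conn k)) ∧
      -- the tail `ₙHL_1 → ₙH^Lie_1 → 0` and the isomorphism in degree `0`
      Function.Surjective (proj 1) ∧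
      Function.Bijective (proj 0)) := by
  have hR := hR_of br fund ω₁ hω₁ ωrD hωrD
  have hω := ω₁_gen br ω₁ hω₁ ωrD hωrD
  have hL := hL_of ω₁ ωrD hω hR
  have πsurj : Function.Surjective π := by
    rw [← LinearMap.range_eq_top, eq_top_iff, ← exteriorPower.ιMulti_span K m g,
      Submodule.span_le]
    rintro _ ⟨a, rfl⟩
    exact ⟨tprod K a, hπ a⟩
  have hrπ : ∀ v h, ωrD v h = ωrL v (π h) := by
    intro v h
    have : ωrD v = ωrL v ∘ₗ π := by
      apply PiTensorProduct.ext
      ext a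
      simp only [LinearMap.compMultilinearMap_apply, LinearMap.comp_apply, hωrD, hπ, hωrL]
    exact LinearMap.congr_fun this h
  have hωπ : ∀ a b, π (ω₁ a b) = ω₀bar (π a) (π b) := by
    intro a b
    have : ω₁.compr₂ π = ω₀bar.compl₁₂ π π := by
      apply PiTensorProduct.ext
      ext a : 1
      apply PiTensorProduct.ext
      ext b : 1
      simp only [LinearMap.compMultilinearMap_apply, LinearMap.compr₂_apply,
        LinearMap.compl₁₂_apply, hπ, hω₁, hω₀bar, map_sum]
    exact LinearMap.congr_fun₂ this a b
  obtain ⟨σ, hσ⟩ := LinearMap.exists_rightInverse_of_surjective π (LinearMap.range_eq_top.2 πsurj)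
  have hσ' : ∀ y, π (σ y) = y := fun y => LinearMap.congr_fun hσ y
  let s : ∀ k : ℕ, (g ⊗[K] (⨂[K]^k (⋀[K]^m g))) →ₗ[K] (g ⊗[K] (⨂[K]^k (⨂[K]^m g))) :=
    fun k => LinearMap.lTensor g (PiTensorProduct.map (fun _ : Fin k => σ))
  have hs : ∀ k v (hs : Fin k → (⋀[K]^m g)), s k (v ⊗ₜ[K] tprod K hs)
      = v ⊗ₜ[K] tprod K (fun i => σ (hs i)) := by
    intro k v hs
    simp only [s, LinearMap.lTensor_tmul]
    erw [PiTensorProduct.map_tprod]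
  have hPs : ∀ k y, P₁ k (s k y) = y := by
    intro k y
    have : P₁ k ∘ₗ s k = LinearMap.id := by
      apply ext_pure
      intro v h
      simp only [LinearMap.comp_apply, hs, hP₁, hσ', LinearMap.id_apply]
    exact LinearMap.congr_fun this y
  have hsP : ∀ k x, s k (P₁ k x) = Sg g (σ ∘ₗ π) k x := by
    intro k x
    have : s k ∘ₗ P₁ k = Sg g (σ ∘ₗ π) k := by
      apply ext_pure
      intro v h
      simp only [LinearMap.comp_apply, hs, hP₁, Sg_tprod]
    exact LinearMap.congr_fun this x
  have surj : ∀ k, Function.Surjective (P₁ k) := fun k y => ⟨s k y, hPs k y⟩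
  have comm : ∀ k, P₁ k ∘ₗ dD k = dL k ∘ₗ P₁ (k+1) := by
    intro k
    apply ext_pure
    intro v h
    simp only [LinearMap.comp_apply, hdD, hP₁, hdL, map_add, map_sum, map_smul, hrπ]
    congr 1
    refine Finset.sum_congr rfl fun j _ => Finset.sum_congr rfl fun i _ => ?_
    congr 3
    ext1 t
    by_cases hi : j.succAbove t = i
    · rw [hi, Function.update_self, Function.update_self, hωπ]
    · rw [Function.update_of_ne hi, Function.update_of_ne hi]
  have inj : Function.Injective (P₁ 0) := by
    have : s 0 ∘ₗ P₁ 0 = LinearMap.id := by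
      apply ext_pure
      intro v h
      simp only [LinearMap.comp_apply, hs, hP₁, LinearMap.id_apply]
      congr 2
      exact Subsingleton.elim _ _
    exact Function.LeftInverse.injective (g := s 0) (fun x => LinearMap.congr_fun this x)
  have hdd := Sg_dd hR hL (d := dD) hdD (σ ∘ₗ π) (fun v h => by
    rw [LinearMap.comp_apply, hrπ, hσ', ← hrπ])
  have strict : ∀ k w, P₁ k (dD k (dD (k+1) w)) = 0 →
      ∃ n, P₁ (k+2) n = 0 ∧ dD k (dD (k+1) n) = dD k (dD (k+1) w) := by
    intro k w h0
    refine ⟨w - s (k+2) (P₁ (k+2) w), by rw [map_sub, hPs, sub_self], ?_⟩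
    have h1 := LinearMap.congr_fun (hdd k) w
    simp only [LinearMap.comp_apply] at h1
    rw [map_sub, map_sub, hsP, ← h1, ← hsP, h0, map_zero, sub_zero]
  refine ⟨surj, comm, ?_⟩
  exact les_main (fun k => g ⊗[K] (⨂[K]^k (⨂[K]^m g))) (fun k => g ⊗[K] (⨂[K]^k (⋀[K]^m g)))
    dD dL P₁ surj (fun k x => LinearMap.congr_fun (comm k) x) strict inj
end

section
/- Let g be an n-Filippov algebra over K, π : D_n(g) → L_n(g) the canonical projection, and Γ_g := ker(π). For a tuple x = (x₁,…,x_{n−1}) ∈ g^{n−1} let δ_x : D_n(g) → D_n(g) and δ̄_x : L_n(g) → L_n(g) be the linear maps determined by δ_x(b₁⊗…⊗b_{n−1}) = Σ_i b₁⊗…⊗[b_i,x₁,…,x_{n−1}]⊗…⊗b_{n−1} and δ̄_x(b₁∧…∧b_{n−1}) = Σ_i b₁∧…∧[b_i,x₁,…,x_{n−1}]∧…∧b_{n−1}. Then π ∘ δ_x = δ̄_x ∘ π; in particular δ_x(Γ_g) ⊆ Γ_g, so that Γ_g is a co-representation of the Leibniz algebra L_n(g) under the restriction of the left action ω₂^l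 and the trivial right action. -/
open scoped TensorProduct
open PiTensorProduct

/-- The commutator of the two derivation-like extensions is the extension of the commutator. -/
theorem sum_update_comm {K g : Type} [Field K] [AddCommGroup g] [Module K g] {m : ℕ}
    (f h : g →ₗ[K] g) (F H : (⨂[K]^m g) →ₗ[K] (⨂[K]^m g))
    (hF : ∀ b : Fin m → g, F (tprod K b) = ∑ i, tprod K (Function.update b i (f (b i))))
    (hH : ∀ b : Fin m → g, H (tprod K b) = ∑ i, tprod K (Function.update b i (h (b i))))
    (b : Fin m → g) :
    F (H (tprod K b)) - H (F (tprod K b))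
      = ∑ i, tprod K (Function.update b i (f (h (b i)) - h (f (b i)))) := by
  rw [hF, hH, map_sum, map_sum]
  simp only [hF, hH]
  rw [Finset.sum_comm (f := fun i j => tprod K (Function.update
    (Function.update b i (f (b i))) j (h (Function.update b i (f (b i)) j))))]
  rw [← Finset.sum_sub_distrib]
  refine Finset.sum_congr rfl fun i _ => ?_
  rw [← Finset.sum_sub_distrib, Finset.sum_eq_single i]
  · simp only [Function.update_idem, Function.update_self]
    exact ((PiTensorProduct.tprod K).map_update_sub b i _ _).symm
  · intro j _ hj
    rw [Function.update_of_ne hj, Function.update_of_ne hj.symm,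
      Function.update_comm hj.symm, sub_self]
  · simp

theorem wedge_induction {K g : Type} [Field K] [AddCommGroup g] [Module K g] {m : ℕ}
    {p : ⋀[K]^m g → Prop} (hw : ∀ a : Fin m → g, p (wedge K a)) (h0 : p 0)
    (hadd : ∀ x y, p x → p y → p (x + y)) (hs : ∀ (c : K) x, p x → p (c • x)) (ξ) : p ξ := by
  have hξ : ξ ∈ Submodule.span K (Set.range (exteriorPower.ιMulti K m (M := g))) := by
    rw [exteriorPower.ιMulti_span]; trivial
  induction hξ using Submodule.span_induction with
  | mem x hx => obtain ⟨a, rfl⟩ := hx; exact hw a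
  | zero => exact h0
  | add x y _ _ hx hy => exact hadd x y hx hy
  | smul c x _ hx => exact hs c x hx

/-- Let `g` be an `n`-Filippov algebra over a field `K` of characteristic
`≠ 2` (write `n = m + 1`, `n ≥ 2`), `π : Dₙ(g) → Lₙ(g)` the canonical projection and
`Γ_g := ker π`.  For a tuple `x ∈ g^{n-1}` let `δ_x` and `δ̄_x` be the linear maps determined
by `δ_x(b₁⊗…⊗b_{n-1}) = Σᵢ b₁⊗…⊗[bᵢ,x₁,…,x_{n-1}]⊗…⊗b_{n-1}` and
`δ̄_x(b₁∧…∧b_{n-1}) = Σᵢ b₁∧…∧[bᵢ,x₁,…,x_{n-1}]∧…∧b_{n-1}`.  Then `π ∘ δ_x = δ̄_x ∘ π`;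
in particular `δ_x(Γ_g) ⊆ Γ_g`, so that `Γ_g` is a co-representation of the Leibniz algebra
`(Lₙ(g), ω̄₀)` under the restriction of the left action `ω₂ˡ` and the trivial right action. -/
theorem statement10 (K : Type) [Field K] (hchar : ringChar K ≠ 2)
    (g : Type) [AddCommGroup g] [Module K g] (m : ℕ) (hm : 1 ≤ m)
    (br : MultilinearMap K (fun _ : Fin (m+1) => g) g)
    (fund : ∀ (x : Fin (m+1) → g) (y : Fin m → g),
      br (Fin.cons (br x) y)
        = ∑ i : Fin (m+1), br (Function.update x i (br (Fin.cons (x i) y))))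
    (alt : ∀ (x : Fin (m+1) → g) (i j : Fin (m+1)), i ≠ j → x i = x j → br x = 0)
    -- the canonical projection π : Dₙ(g) → Lₙ(g)
    (π : (⨂[K]^m g) →ₗ[K] ⋀[K]^m g)
    (hπ : ∀ a : Fin m → g, π (tprod K a) = wedge K a)
    -- the maps δ_x and δ̄_x
    (δ : (Fin m → g) → ((⨂[K]^m g) →ₗ[K] (⨂[K]^m g)))
    (hδ : ∀ (x : Fin m → g) (b : Fin m → g),
      δ x (tprod K b)
        = ∑ i : Fin m, tprod K (Function.update b i (br (Fin.cons (b i) x))))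
    (δbar : (Fin m → g) → ((⋀[K]^m g) →ₗ[K] (⋀[K]^m g)))
    (hδbar : ∀ (x : Fin m → g) (b : Fin m → g),
      δbar x (wedge K b)
        = ∑ i : Fin m, wedge K (Function.update b i (br (Fin.cons (b i) x))))
    -- the Leibniz bracket ω̄₀ on Lₙ(g)
    (ω₀bar : (⋀[K]^m g) →ₗ[K] (⋀[K]^m g) →ₗ[K] (⋀[K]^m g))
    (hω₀bar : ∀ a b : Fin m → g,
      ω₀bar (wedge K a) (wedge K b)
        = ∑ i : Fin m, wedge K (Function.update a i (br (Fin.cons (a i) b))))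
    -- the left action ω₂ˡ of Lₙ(g) on Dₙ(g)
    (ω₂l : (⋀[K]^m g) →ₗ[K] (⨂[K]^m g) →ₗ[K] (⨂[K]^m g))
    (hω₂l : ∀ a b : Fin m → g,
      ω₂l (wedge K a) (tprod K b)
        = - ∑ i : Fin m, tprod K (Function.update b i (br (Fin.cons (b i) a)))) :
    -- `π ∘ δ_x = δ̄_x ∘ π`
    (∀ x : Fin m → g, π ∘ₗ δ x = (δbar x) ∘ₗ π) ∧
    -- in particular `δ_x(Γ_g) ⊆ Γ_g` …
    (∀ (x : Fin m → g) (v : ⨂[K]^m g), v ∈ LinearMap.ker π → δ x v ∈ LinearMap.ker π) ∧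
    -- … and `ω₂ˡ` preserves `Γ_g`, …
    (∀ (ξ : ⋀[K]^m g) (v : ⨂[K]^m g), v ∈ LinearMap.ker π → ω₂l ξ v ∈ LinearMap.ker π) ∧
    -- … so `Γ_g`, with left action the restriction of `ω₂ˡ` and trivial right action, is a
    -- co-representation of `(Lₙ(g), ω̄₀)` (the remaining two axioms hold trivially since the
    -- right action is zero)
    (∀ (ξ η : ⋀[K]^m g) (v : ⨂[K]^m g), v ∈ LinearMap.ker π →
      ω₂l (ω₀bar ξ η) v = ω₂l ξ (ω₂l η v) - ω₂l η (ω₂l ξ v)) := by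
  have h1 : ∀ x : Fin m → g, π ∘ₗ δ x = (δbar x) ∘ₗ π := by
    intro x
    refine PiTensorProduct.ext (MultilinearMap.ext fun b => ?_)
    simp only [LinearMap.compMultilinearMap_apply, LinearMap.comp_apply]
    rw [hδ, hπ, hδbar, map_sum]
    simp only [hπ]
  have h2 : ∀ (x : Fin m → g) (v : ⨂[K]^m g), v ∈ LinearMap.ker π →
      δ x v ∈ LinearMap.ker π := by
    intro x v hv
    rw [LinearMap.mem_ker] at hv ⊢
    have := LinearMap.congr_fun (h1 x) v
    simpa [hv] using this
  have hω : ∀ a : Fin m → g, ω₂l (wedge K a) = - δ a := by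
    intro a
    refine PiTensorProduct.ext (MultilinearMap.ext fun b => ?_)
    simp only [LinearMap.compMultilinearMap_apply, LinearMap.neg_apply]
    rw [hδ, hω₂l]
  refine ⟨h1, h2, ?_, ?_⟩
  · intro ξ v hv
    induction ξ using wedge_induction with
    | hw a => rw [hω]; exact neg_mem (h2 a v hv)
    | h0 => simp
    | hadd x y hx hy => rw [map_add]; exact add_mem hx hy
    | hs c x hx => rw [map_smul]; exact Submodule.smul_mem _ c hx
  · -- the bracket as a family of linear endomorphisms
    let d : (Fin m → g) → (g →ₗ[K] g) := fun x =>
      { toFun := fun z => br (Fin.cons z x)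
        map_add' := fun z w => by
          have := br.map_update_add (Fin.cons 0 x) 0 z w
          simpa only [Fin.update_cons_zero] using this
        map_smul' := fun c z => by
          have := br.map_update_smul (Fin.cons 0 x) 0 c z
          simpa only [Fin.update_cons_zero, RingHom.id_apply] using this }
    have hd : ∀ x z, d x z = br (Fin.cons z x) := fun _ _ => rfl
    have hcomm : ∀ (a y : Fin m → g) (z : g), d y (d a z) - d a (d y z)
        = ∑ i, d (Function.update a i (br (Fin.cons (a i) y))) z := by
      intro a y z
      simp only [hd]
      rw [fund, Fin.sum_univ_succ]
      simp only [Fin.update_cons_zero, Fin.cons_zero, Fin.cons_succ, ← Fin.cons_update]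
      abel
    have key : ∀ (a y : Fin m → g), ω₂l (ω₀bar (wedge K a) (wedge K y))
        = ω₂l (wedge K a) ∘ₗ ω₂l (wedge K y) - ω₂l (wedge K y) ∘ₗ ω₂l (wedge K a) := by
      intro a y
      refine PiTensorProduct.ext (MultilinearMap.ext fun b => ?_)
      rw [hω₀bar, map_sum]
      simp only [hω, LinearMap.compMultilinearMap_apply, LinearMap.sub_apply,
        LinearMap.comp_apply, LinearMap.neg_apply, map_neg, neg_neg, LinearMap.sum_apply]
      rw [← neg_sub, sum_update_comm (d y) (d a) (δ y) (δ a) (hδ y) (hδ a) b,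
        Finset.sum_neg_distrib]
      simp only [hδ]
      rw [Finset.sum_comm]
      congr 1
      refine Finset.sum_congr rfl fun i _ => ?_
      rw [hcomm, MultilinearMap.map_update_sum]
      rfl
    intro ξ η v _
    have : ω₂l (ω₀bar ξ η) = ω₂l ξ ∘ₗ ω₂l η - ω₂l η ∘ₗ ω₂l ξ := by
      induction ξ using wedge_induction with
      | hw a =>
        induction η using wedge_induction with
        | hw y => exact key a y
        | h0 => simp
        | hadd x y hx hy =>
          simp only [map_add, hx, hy, LinearMap.comp_add, LinearMap.add_comp]; abel
        | hs c x hx =>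
          simp only [map_smul, hx, LinearMap.comp_smul, LinearMap.smul_comp, smul_sub]
      | h0 => simp
      | hadd x y hx hy =>
        simp only [map_add, LinearMap.add_apply, hx, hy, LinearMap.comp_add, LinearMap.add_comp]
        abel
      | hs c x hx =>
        simp only [map_smul, LinearMap.smul_apply, hx, LinearMap.comp_smul,
          LinearMap.smul_comp, smul_sub]
    rw [this]; rfl
end

section
/- Let g be a Leibniz n-algebra over K. Then (D_n(g), ω₁) is a Leibniz algebra: for all u, v, w ∈ g^{⊗(n−1)}, ω₁(ω₁(u,v), w) = ω₁(ω₁(u,w), v) + ω₁(u, ω₁(v,w)). -/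
open scoped TensorProduct
open PiTensorProduct

/-- Let `g` be a Leibniz `n`-algebra over a field `K` of characteristic `≠ 2`
(write `n = m + 1`, `n ≥ 2`).  Then `(Dₙ(g), ω₁)` is a Leibniz algebra, where
`Dₙ(g) = g^{⊗(n-1)}` and `ω₁` is the bilinear map determined on pure tensors by
`ω₁(a₁⊗…⊗a_{n-1}, b₁⊗…⊗b_{n-1}) = Σᵢ a₁⊗…⊗[aᵢ,b₁,…,b_{n-1}]⊗…⊗a_{n-1}`:
for all `u v w`, `ω₁(ω₁(u,v),w) = ω₁(ω₁(u,w),v) + ω₁(u,ω₁(v,w))`. -/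
theorem statement15 (K : Type) [Field K] (hchar : ringChar K ≠ 2)
    (g : Type) [AddCommGroup g] [Module K g] (m : ℕ) (hm : 1 ≤ m)
    (br : MultilinearMap K (fun _ : Fin (m+1) => g) g)
    (fund : ∀ (x : Fin (m+1) → g) (y : Fin m → g),
      br (Fin.cons (br x) y)
        = ∑ i : Fin (m+1), br (Function.update x i (br (Fin.cons (x i) y))))
    (ω₁ : (⨂[K]^m g) →ₗ[K] (⨂[K]^m g) →ₗ[K] (⨂[K]^m g))
    (hω₁ : ∀ a b : Fin m → g,
      ω₁ (tprod K a) (tprod K b)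
        = ∑ i : Fin m, tprod K (Function.update a i (br (Fin.cons (a i) b)))) :
    ∀ u v w : ⨂[K]^m g, ω₁ (ω₁ u v) w = ω₁ (ω₁ u w) v + ω₁ u (ω₁ v w) := by
  have pure : ∀ a b c : Fin m → g, ω₁ (ω₁ (tprod K a) (tprod K b)) (tprod K c)
      = ω₁ (ω₁ (tprod K a) (tprod K c)) (tprod K b)
        + ω₁ (tprod K a) (ω₁ (tprod K b) (tprod K c)) := by
    intro a b c
    simp only [hω₁, map_sum, LinearMap.sum_apply]
    rw [Finset.sum_comm (f := fun i j => tprod K (Function.update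
      (Function.update a i (br (Fin.cons (a i) c))) j
      (br (Fin.cons (Function.update a i (br (Fin.cons (a i) c)) j) b))))]
    rw [Finset.sum_comm (f := fun k i => tprod K (Function.update a i
      (br (Fin.cons (a i) (Function.update b k (br (Fin.cons (b k) c)))))))]
    rw [← Finset.sum_add_distrib]
    refine Finset.sum_congr rfl fun i _ => ?_
    have key : br (Fin.cons (br (Fin.cons (a i) b)) c)
        = br (Fin.cons (br (Fin.cons (a i) c)) b)
          + ∑ k : Fin m, br (Fin.cons (a i) (Function.update b k (br (Fin.cons (b k) c)))) := by
      rw [fund, Fin.sum_univ_succ]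
      simp only [Fin.cons_zero, Fin.cons_succ, Fin.update_cons_zero, Fin.cons_update]
    rw [← Finset.add_sum_erase _ _ (Finset.mem_univ i),
      ← Finset.add_sum_erase (a := i) (f := fun j => tprod K (Function.update
      (Function.update a j (br (Fin.cons (a j) c))) i
      (br (Fin.cons (Function.update a j (br (Fin.cons (a j) c)) i) b)))) _ (Finset.mem_univ i)]
    have off : ∀ j ∈ Finset.univ.erase i, tprod K (Function.update
        (Function.update a i (br (Fin.cons (a i) b))) j
        (br (Fin.cons (Function.update a i (br (Fin.cons (a i) b)) j) c)))
        = tprod K (Function.update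
        (Function.update a j (br (Fin.cons (a j) c))) i
        (br (Fin.cons (Function.update a j (br (Fin.cons (a j) c)) i) b))) := by
      intro j hj
      have hji : j ≠ i := Finset.ne_of_mem_erase hj
      rw [Function.update_of_ne hji, Function.update_of_ne hji.symm,
        Function.update_comm hji]
    rw [Finset.sum_congr rfl off]
    simp only [Function.update_self, Function.update_idem]
    rw [key, MultilinearMap.map_update_add, MultilinearMap.map_update_sum]
    abel
  intro u v w
  induction u using PiTensorProduct.induction_on with
  | add u₁ u₂ h₁ h₂ => simp only [map_add, LinearMap.add_apply, h₁, h₂]; abel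
  | smul_tprod r a =>
  induction v using PiTensorProduct.induction_on with
  | add u₁ u₂ h₁ h₂ => simp only [map_add, LinearMap.add_apply, h₁, h₂]; abel
  | smul_tprod s b =>
  induction w using PiTensorProduct.induction_on with
  | add u₁ u₂ h₁ h₂ => simp only [map_add, LinearMap.add_apply, h₁, h₂]; abel
  | smul_tprod t c =>
  simp only [map_smul, LinearMap.smul_apply]
  rw [pure]
  simp only [smul_add]
  simp only [smul_smul]
  congr 2 <;> ring
end

section
/- Let g be an n-Filippov algebra over K. Then there is a unique bilinear map ω̄₀ : L_n(g) × L_n(g) → L_n(g) satisfying ω̄₀(a₁∧…∧a_{n−1}, b₁∧…∧b_{n−1}) = Σ_{i=1}^{n−1} a₁∧…∧[a_i,b₁,…,b_{n−1}]∧…∧a_{n−1}, and (L_n(g), ω̄₀) is a Leibniz algebra: ω̄₀(ω̄₀(u,v), w) = ω̄₀(ω̄₀(u,w), v) + ω̄₀(u, ω̄₀(v,w)) for all u, v, w ∈ L_n(g). -/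
open scoped TensorProduct
open PiTensorProduct

section Helpers
variable {K : Type} [Field K] {g : Type} [AddCommGroup g] [Module K g] {m : ℕ}

lemma wedge_eq (a : Fin m → g) : wedge K a = exteriorPower.ιMulti K m a := rfl

/-- The derivation formula as a multilinear map. -/
noncomputable def derMul (D : g →ₗ[K] g) :
    MultilinearMap K (fun _ : Fin m => g) (⋀[K]^m g) :=
  ∑ i : Fin m, (exteriorPower.ιMulti K m (M := g)).toMultilinearMap.compLinearMap
    (Function.update (fun _ => LinearMap.id) i D)

lemma derMul_apply (D : g →ₗ[K] g) (a : Fin m → g) :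
    derMul D a = ∑ i : Fin m, exteriorPower.ιMulti K m (Function.update a i (D (a i))) := by
  unfold derMul
  rw [_root_.sum_apply]
  refine Finset.sum_congr rfl fun i _ => ?_
  rw [MultilinearMap.compLinearMap_apply]
  change exteriorPower.ιMulti K m _ = _
  congr 1
  funext j
  by_cases h : j = i
  · subst h; simp
  · simp [h]

/-- The derivation formula as an alternating map. -/
noncomputable def derAlt (D : g →ₗ[K] g) : g [⋀^Fin m]→ₗ[K] (⋀[K]^m g) :=
  { derMul D with
    map_eq_zero_of_eq' := by
      intro v i j hv hij
      change derMul D v = 0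
      rw [derMul_apply]
      rw [← Finset.sum_subset (Finset.subset_univ {i, j}), Finset.sum_pair hij]
      · have h : Function.update v j (D (v j)) = Function.update v i (D (v i)) ∘ Equiv.swap i j := by
          funext k
          by_cases hki : k = i
          · subst hki; simp [hij, hij.symm, hv]
          · by_cases hkj : k = j
            · subst hkj; simp [hv]
            · simp [Equiv.swap_apply_of_ne_of_ne hki hkj, hki, hkj]
        rw [h, AlternatingMap.map_swap _ _ hij]
        simp
      · intro k _ hk
        simp only [Finset.mem_insert, Finset.mem_singleton, not_or] at hk
        refine AlternatingMap.map_eq_zero_of_eq _ _ (i := i) (j := j) ?_ hij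
        simp [Ne.symm hk.1, Ne.symm hk.2, hv] }

lemma derAlt_apply (D : g →ₗ[K] g) (a : Fin m → g) :
    derAlt D a = ∑ i : Fin m, exteriorPower.ιMulti K m (Function.update a i (D (a i))) :=
  derMul_apply D a

variable (K g m) in
/-- The derivation extension, linear in the endomorphism. -/
noncomputable def der : (g →ₗ[K] g) →ₗ[K] (⋀[K]^m g) →ₗ[K] (⋀[K]^m g) :=
  exteriorPower.alternatingMapLinearEquiv.toLinearMap ∘ₗ
  { toFun := derAlt
    map_add' := by
      intro D E
      ext1 a
      simp only [AlternatingMap.add_apply, derAlt_apply, LinearMap.add_apply,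
        AlternatingMap.map_update_add, Finset.sum_add_distrib]
    map_smul' := by
      intro c D
      ext1 a
      simp only [AlternatingMap.smul_apply, derAlt_apply, LinearMap.smul_apply,
        AlternatingMap.map_update_smul, Finset.smul_sum, RingHom.id_apply] }

lemma der_apply (D : g →ₗ[K] g) (a : Fin m → g) :
    der K g m D (exteriorPower.ιMulti K m a) =
      ∑ i : Fin m, exteriorPower.ιMulti K m (Function.update a i (D (a i))) := by
  rw [← derAlt_apply]
  exact exteriorPower.alternatingMapLinearEquiv_apply_ιMulti _ _

lemma der_comm (D E : g →ₗ[K] g) (u : ⋀[K]^m g) :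
    der K g m D (der K g m E u) = der K g m E (der K g m D u)
      + der K g m (D ∘ₗ E - E ∘ₗ D) u := by
  suffices h : der K g m D ∘ₗ der K g m E = der K g m E ∘ₗ der K g m D
      + der K g m (D ∘ₗ E - E ∘ₗ D) from LinearMap.congr_fun h u
  apply exteriorPower.linearMap_ext
  ext1 a
  simp only [LinearMap.compAlternatingMap_apply, LinearMap.add_apply, LinearMap.comp_apply,
    der_apply, map_sum]
  rw [← sub_eq_iff_eq_add']
  conv_lhs => rw [sub_eq_add_neg]; arg 2; rw [Finset.sum_comm]
  rw [← sub_eq_add_neg, ← Finset.sum_sub_distrib]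
  refine Finset.sum_congr rfl fun i _ => ?_
  rw [← Finset.sum_sub_distrib, Finset.sum_eq_single i]
  · simp [AlternatingMap.map_update_sub]
  · intro j _ hj
    rw [Function.update_of_ne hj, Function.update_of_ne hj.symm, Function.update_comm hj, sub_self]
  · simp

/-- The right multiplication as an alternating map into endomorphisms. -/
noncomputable def adAlt (br : MultilinearMap K (fun _ : Fin (m+1) => g) g)
    (alt : ∀ (x : Fin (m+1) → g) (i j : Fin (m+1)), i ≠ j → x i = x j → br x = 0) :
    g [⋀^Fin m]→ₗ[K] (g →ₗ[K] g) where
  toFun b :=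
    { toFun := fun x => br (Fin.cons x b)
      map_add' := fun x y => br.cons_add b x y
      map_smul' := fun c x => br.cons_smul b c x }
  map_update_add' := by
    intro inst b i x y
    obtain rfl : inst = instDecidableEqFin m := Subsingleton.elim _ _
    ext z
    simp only [LinearMap.coe_mk, AddHom.coe_mk, LinearMap.add_apply]
    simp only [Fin.cons_update, MultilinearMap.map_update_add]
  map_update_smul' := by
    intro inst b i c x
    obtain rfl : inst = instDecidableEqFin m := Subsingleton.elim _ _
    ext z
    simp only [LinearMap.coe_mk, AddHom.coe_mk, LinearMap.smul_apply]
    simp only [Fin.cons_update, MultilinearMap.map_update_smul]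
  map_eq_zero_of_eq' := by
    intro b i j hb hij
    ext z
    refine alt _ i.succ j.succ (by simpa using hij) (by simpa using hb)

/-- The right multiplication as a linear map. -/
noncomputable def adL (br : MultilinearMap K (fun _ : Fin (m+1) => g) g)
    (alt : ∀ (x : Fin (m+1) → g) (i j : Fin (m+1)), i ≠ j → x i = x j → br x = 0) :
    (⋀[K]^m g) →ₗ[K] (g →ₗ[K] g) :=
  exteriorPower.alternatingMapLinearEquiv (adAlt br alt)

lemma adL_apply (br : MultilinearMap K (fun _ : Fin (m+1) => g) g)
    (alt : ∀ (x : Fin (m+1) → g) (i j : Fin (m+1)), i ≠ j → x i = x j → br x = 0)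
    (b : Fin m → g) (x : g) :
    adL br alt (exteriorPower.ιMulti K m b) x = br (Fin.cons x b) := by
  unfold adL
  rw [exteriorPower.alternatingMapLinearEquiv_apply_ιMulti]
  rfl

lemma bilin_ext {N : Type} [AddCommGroup N] [Module K N]
    {f h : (⋀[K]^m g) →ₗ[K] (⋀[K]^m g) →ₗ[K] N}
    (H : ∀ a b : Fin m → g, f (exteriorPower.ιMulti K m a) (exteriorPower.ιMulti K m b) =
      h (exteriorPower.ιMulti K m a) (exteriorPower.ιMulti K m b)) : f = h := by
  apply exteriorPower.linearMap_ext
  ext1 a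
  apply exteriorPower.linearMap_ext
  ext1 b
  exact H a b

lemma adL_der (br : MultilinearMap K (fun _ : Fin (m+1) => g) g)
    (fund : ∀ (x : Fin (m+1) → g) (y : Fin m → g),
      br (Fin.cons (br x) y)
        = ∑ i : Fin (m+1), br (Function.update x i (br (Fin.cons (x i) y))))
    (alt : ∀ (x : Fin (m+1) → g) (i j : Fin (m+1)), i ≠ j → x i = x j → br x = 0)
    (v w : ⋀[K]^m g) :
    adL br alt (der K g m (adL br alt w) v) =
      adL br alt w ∘ₗ adL br alt v - adL br alt v ∘ₗ adL br alt w := by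
  let A := adL br alt
  suffices h : ((der K g m ∘ₗ A).flip.compr₂ A) =
      ((LinearMap.mul K (Module.End K g)).compl₁₂ A A).flip -
        (LinearMap.mul K (Module.End K g)).compl₁₂ A A from
    LinearMap.congr_fun (LinearMap.congr_fun h v) w
  apply bilin_ext
  intro b c
  generalize hv : exteriorPower.ιMulti K m b = v'
  generalize hw : exteriorPower.ιMulti K m c = w'
  change A (der K g m (A w') v') = A w' ∘ₗ A v' - A v' ∘ₗ A w'
  subst hv hw
  ext x
  rw [der_apply, map_sum, LinearMap.sum_apply]
  simp only [A, LinearMap.sub_apply, LinearMap.comp_apply, adL_apply]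
  rw [fund, Fin.sum_univ_succ]
  simp [Fin.cons_update]

end Helpers

/-- Let `g` be an `n`-Filippov algebra over a field `K` of characteristic
`≠ 2` (write `n = m + 1`, `n ≥ 2`).  Then there is a unique bilinear map
`ω̄₀ : Lₙ(g) × Lₙ(g) → Lₙ(g)` (where `Lₙ(g) = g^{∧(n-1)}`) satisfying
`ω̄₀(a₁∧…∧a_{n-1}, b₁∧…∧b_{n-1}) = Σᵢ a₁∧…∧[aᵢ,b₁,…,b_{n-1}]∧…∧a_{n-1}`, and
`(Lₙ(g), ω̄₀)` is a Leibniz algebra. -/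
theorem statement16 (K : Type) [Field K] (hchar : ringChar K ≠ 2)
    (g : Type) [AddCommGroup g] [Module K g] (m : ℕ) (hm : 1 ≤ m)
    (br : MultilinearMap K (fun _ : Fin (m+1) => g) g)
    (fund : ∀ (x : Fin (m+1) → g) (y : Fin m → g),
      br (Fin.cons (br x) y)
        = ∑ i : Fin (m+1), br (Function.update x i (br (Fin.cons (x i) y))))
    (alt : ∀ (x : Fin (m+1) → g) (i j : Fin (m+1)), i ≠ j → x i = x j → br x = 0) :
    (∃! f : (⋀[K]^m g) →ₗ[K] (⋀[K]^m g) →ₗ[K] (⋀[K]^m g),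
      ∀ a b : Fin m → g,
        f (wedge K a) (wedge K b)
          = ∑ i : Fin m, wedge K (Function.update a i (br (Fin.cons (a i) b)))) ∧
    (∀ f : (⋀[K]^m g) →ₗ[K] (⋀[K]^m g) →ₗ[K] (⋀[K]^m g),
      (∀ a b : Fin m → g,
        f (wedge K a) (wedge K b)
          = ∑ i : Fin m, wedge K (Function.update a i (br (Fin.cons (a i) b)))) →
      ∀ u v w : ⋀[K]^m g, f (f u v) w = f (f u w) v + f u (f v w)) := by
  let F : (⋀[K]^m g) →ₗ[K] (⋀[K]^m g) →ₗ[K] (⋀[K]^m g) := (der K g m ∘ₗ adL br alt).flip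
  have hFap : ∀ u v, F u v = der K g m (adL br alt v) u := fun _ _ => rfl
  have hF : ∀ a b : Fin m → g, F (wedge K a) (wedge K b)
      = ∑ i : Fin m, wedge K (Function.update a i (br (Fin.cons (a i) b))) := by
    intro a b
    simp only [hFap, wedge_eq, der_apply, adL_apply]
  have huniq : ∀ f : (⋀[K]^m g) →ₗ[K] (⋀[K]^m g) →ₗ[K] (⋀[K]^m g),
      (∀ a b : Fin m → g, f (wedge K a) (wedge K b)
        = ∑ i : Fin m, wedge K (Function.update a i (br (Fin.cons (a i) b)))) → f = F := by
    intro f hf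
    apply bilin_ext
    intro a b
    exact (hf a b).trans (hF a b).symm
  refine ⟨⟨F, hF, huniq⟩, ?_⟩
  intro f hf u v w
  rw [huniq f hf]
  simp only [hFap]
  rw [adL_der br fund alt, der_comm]
end
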